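/- arXiv:1510.03044 — 3 statements merged into one kernel-verified Lean document; each statement's English description precedes it below -/
import Mathlib

section
/- Let n ≥ 2. Let Y_c and L be real symmetric n×n weighted graph Laplacians (nonpositive off-diagonal entries, zero row sums), each of rank n−1 (connected), let Y_s be diagonal with nonnegative entries and Y = Y_s + Y_c; if Y_s ≠ 0 assume additionally Y⁻¹ is entrywise nonnegative. Let D = diag(τ_1,…,τ_n) with τ_i > 0, R = diag(R_1,…,R_n) with R_i > 0, Υ = diag(I_1^max,…,I_n^max) with I_i^max > 0, Ψ = diag(β_1,…,β_n) with β_i > 0, and Φ = diag(α_1,…,α_n) with α_i ≥ 0. Suppose there exist positive scalars ū and r̄ such that R_i·I_i^max = ū and α_i = r̄·β_i for all i, a positive scalar ν₁ such that the symmetric matrix Υ + ū·Y − ν₁·(YΨL + LΨY)/2 is positive semidefinite, and a θ ≥ 0 admissible for YΨL such that (ν₁ + r̄)·θ² + r̄ > max_i τ_i. Then the closed-loop matrix A_c is semistable. -/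
open Matrix Filter Topology

/-- A real square matrix `A` is semistable if `exp(tA)x₀` converges as `t → ∞` for every
initial vector `x₀`. -/
def IsSemistable {N : Type*} [Fintype N] [DecidableEq N]
    (A : Matrix N N ℝ) : Prop :=
  ∀ x₀ : N → ℝ, ∃ y : N → ℝ,
    Tendsto (fun t : ℝ => NormedSpace.exp (t • A) *ᵥ x₀) atTop (𝓝 y)

/-- `θ ≥ 0` is admissible for a real square matrix `M` (with symmetric part `M_s` and
skew-symmetric part `M_k`) if both block matrices `[[M_s, ±θM_k],[±θM_kᵀ, M_s]]` are
positive semidefinite. -/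
def IsAdmissible {n : ℕ} (θ : ℝ) (M : Matrix (Fin n) (Fin n) ℝ) : Prop :=
  0 ≤ θ ∧
  (Matrix.fromBlocks ((1 / 2 : ℝ) • (M + Mᵀ)) (θ • ((1 / 2 : ℝ) • (M - Mᵀ)))
      (θ • ((1 / 2 : ℝ) • (M - Mᵀ))ᵀ) ((1 / 2 : ℝ) • (M + Mᵀ))).PosSemidef ∧
  (Matrix.fromBlocks ((1 / 2 : ℝ) • (M + Mᵀ)) ((-θ) • ((1 / 2 : ℝ) • (M - Mᵀ)))
      ((-θ) • ((1 / 2 : ℝ) • (M - Mᵀ))ᵀ) ((1 / 2 : ℝ) • (M + Mᵀ))).PosSemidef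

/-!
Measure the currents in units of their maxima. An eigenvector of the closed loop for an eigenvalue
`μ ≠ 0` then yields `w ≠ 0` with `(μ² DΥ + μ (Υ + ūY + r̄ YΨL) + YΨL) w = 0`. Pairing with `w`
gives a scalar quadratic equation `a μ² + (b + r̄ m) μ + m = 0` with `a, b > 0` real and `m`
complex. Admissibility says `|θ Im m| ≤ Re m`, and with the gain condition
`a < ((ν₁ + r̄) θ² + r̄) b` the Routh-Hurwitz test for complex quadratics puts its nonzero roots in
the open left half-plane.

The eigenvalue `0` is semisimple: if `A_c² z = 0`, then the per-unit currents of `A_c z` agree, its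
voltages have weighted sum zero, and the minimum principle for `Y` forces both to vanish.
-/

section RealImaginaryParts

variable {M N : Type*}

lemma map_algebraMap_smul (c : ℝ) (A : Matrix M N ℝ) :
    (c • A).map (algebraMap ℝ ℂ) = (c : ℂ) • A.map (algebraMap ℝ ℂ) := by
  ext i j
  simp

variable [Fintype N]

lemma re_comp_map_mulVec (A : Matrix M N ℝ) (z : N → ℂ) :
    Complex.re ∘ (A.map (algebraMap ℝ ℂ) *ᵥ z) = A *ᵥ (Complex.re ∘ z) := by
  funext i
  simp [mulVec, dotProduct]

lemma im_comp_map_mulVec (A : Matrix M N ℝ) (z : N → ℂ) :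
    Complex.im ∘ (A.map (algebraMap ℝ ℂ) *ᵥ z) = A *ᵥ (Complex.im ∘ z) := by
  funext i
  simp [mulVec, dotProduct]

lemma map_mulVec_eq_zero_iff (A : Matrix M N ℝ) (z : N → ℂ) :
    A.map (algebraMap ℝ ℂ) *ᵥ z = 0 ↔ A *ᵥ (Complex.re ∘ z) = 0 ∧ A *ᵥ (Complex.im ∘ z) = 0 := by
  simp only [← re_comp_map_mulVec, ← im_comp_map_mulVec, funext_iff, Complex.ext_iff,
    forall_and, Function.comp_apply, Pi.zero_apply, Complex.zero_re, Complex.zero_im]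

end RealImaginaryParts

section Semistability

variable {N : Type*} [Fintype N] [DecidableEq N]

open scoped Matrix.Norms.Operator in
lemma exp_mulVec_eq_sum_of_pow_mulVec_eq_zero {B : Matrix N N ℂ} {k : ℕ} {x : N → ℂ}
    (hx : B ^ k *ᵥ x = 0) :
    NormedSpace.exp B *ᵥ x = ∑ j ∈ Finset.range k, (j.factorial : ℂ)⁻¹ • (B ^ j *ᵥ x) := by
  have h_series : HasSum (fun j : ℕ => (j.factorial : ℂ)⁻¹ • (B ^ j *ᵥ x))
      (NormedSpace.exp B *ᵥ x) := by
    simp_rw [← smul_mulVec]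
    exact (NormedSpace.exp_series_hasSum_exp' (𝕂 := ℂ) B).map (mulVec.addMonoidHomLeft x)
      (show Continuous fun M : Matrix N N ℂ => M *ᵥ x by fun_prop)
  have h_vanish : ∀ j ∉ Finset.range k, (j.factorial : ℂ)⁻¹ • (B ^ j *ᵥ x) = 0 := by
    intro j hj
    obtain ⟨i, rfl⟩ := Nat.exists_eq_add_of_le' (not_lt.mp (Finset.mem_range.not.mp hj))
    rw [pow_add, ← mulVec_mulVec, hx, mulVec_zero, smul_zero]
  exact h_series.unique (hasSum_sum_of_ne_finset_zero h_vanish)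

lemma exp_eq_exp_smul_exp_sub_smul_one (B : Matrix N N ℂ) (μ : ℂ) :
    NormedSpace.exp B = Complex.exp μ • NormedSpace.exp (B - μ • 1) := by
  have h_comm : Commute (μ • (1 : Matrix N N ℂ)) (B - μ • 1) := (Commute.one_left _).smul_left μ
  have h_exp : NormedSpace.exp (μ • (1 : Matrix N N ℂ)) = Complex.exp μ • 1 := by
    simp_rw [smul_one_eq_diagonal, Matrix.exp_diagonal, Complex.exp_eq_exp_ℂ]
    congr 1
    funext i
    rw [Pi.coe_exp]
  rw [← one_mul (NormedSpace.exp (B - μ • 1)), ← smul_mul_assoc, ← h_exp,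
    ← Matrix.exp_add_of_commute _ _ h_comm, add_sub_cancel]

lemma mem_genEigenspace_toLin'_iff {B : Matrix N N ℂ} {μ : ℂ} {k : ℕ} {x : N → ℂ} :
    x ∈ Module.End.genEigenspace (toLin' B) μ k ↔ (B - μ • 1) ^ k *ᵥ x = 0 := by
  rw [Module.End.mem_genEigenspace_nat, LinearMap.mem_ker, Module.End.one_eq_id, ← toLin'_one,
    ← map_smul, ← map_sub, ← toLin'_pow, toLin'_apply]

lemma exp_smul_mulVec_of_mem_genEigenspace {B : Matrix N N ℂ} {μ : ℂ} {k : ℕ} {x : N → ℂ}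
    (hx : x ∈ Module.End.genEigenspace (toLin' B) μ k) (t : ℝ) :
    NormedSpace.exp (t • B) *ᵥ x = ∑ j ∈ Finset.range k,
      (Complex.exp (t * μ) * (t : ℂ) ^ j) • ((j.factorial : ℂ)⁻¹ • ((B - μ • 1) ^ j *ᵥ x)) := by
  have h_scale (j : ℕ) :
      (t • B - (t * μ : ℂ) • 1) ^ j *ᵥ x = (t : ℂ) ^ j • ((B - μ • 1) ^ j *ᵥ x) := by
    rw [mul_smul, Complex.coe_smul, ← smul_sub, ← Complex.coe_smul, smul_pow, smul_mulVec]
  have h_pow : (t • B - (t * μ : ℂ) • 1) ^ k *ᵥ x = 0 := by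
    rw [h_scale, mem_genEigenspace_toLin'_iff.mp hx, smul_zero]
  rw [exp_eq_exp_smul_exp_sub_smul_one _ (t * μ : ℂ), smul_mulVec,
    exp_mulVec_eq_sum_of_pow_mulVec_eq_zero h_pow, Finset.smul_sum]
  simp_rw [h_scale, smul_comm (Nat.cast _)⁻¹, smul_smul, mul_assoc]

lemma tendsto_exp_mul_mul_pow_atTop_nhds_zero {μ : ℂ} (hμ : μ.re < 0) (j : ℕ) :
    Tendsto (fun t : ℝ => Complex.exp (t * μ) * (t : ℂ) ^ j) atTop (𝓝 0) := by
  rw [tendsto_zero_iff_norm_tendsto_zero]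
  refine (tendsto_rpow_mul_exp_neg_mul_atTop_nhds_zero j (-μ.re) (neg_pos.mpr hμ)).congr' ?_
  filter_upwards [eventually_ge_atTop 0] with t ht
  rw [Real.rpow_natCast, norm_mul, norm_pow, Complex.norm_exp, Complex.norm_of_nonneg ht,
    Complex.re_ofReal_mul, neg_neg, mul_comm, mul_comm μ.re]

/-- The vectors `x` along which `exp (tB) x` converges as `t → ∞`. Since they form a subspace,
semistability can be checked on one generalized eigenspace at a time. -/
def convergentVectors (B : Matrix N N ℂ) : Submodule ℂ (N → ℂ) where
  carrier := {x | ∃ y, Tendsto (fun t : ℝ => NormedSpace.exp (t • B) *ᵥ x) atTop (𝓝 y)}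
  add_mem' := by
    rintro x x' ⟨y, hy⟩ ⟨y', hy'⟩
    exact ⟨y + y', by simpa only [mulVec_add] using hy.add hy'⟩
  zero_mem' := ⟨0, by simpa only [mulVec_zero] using tendsto_const_nhds⟩
  smul_mem' := by
    rintro c x ⟨y, hy⟩
    exact ⟨c • y, by simpa only [mulVec_smul] using hy.const_smul c⟩

lemma ker_toLin'_le_convergentVectors (B : Matrix N N ℂ) :
    LinearMap.ker (toLin' B) ≤ convergentVectors B := by
  intro x hx
  have h_eigenspace : x ∈ Module.End.genEigenspace (toLin' B) 0 (1 : ℕ) :=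
    mem_genEigenspace_toLin'_iff.mpr (by simpa using hx)
  refine ⟨x, tendsto_const_nhds.congr fun t => ?_⟩
  simp [exp_smul_mulVec_of_mem_genEigenspace h_eigenspace]

lemma maxGenEigenspace_le_convergentVectors (B : Matrix N N ℂ) {μ : ℂ} (hμ : μ.re < 0) :
    Module.End.maxGenEigenspace (toLin' B) μ ≤ convergentVectors B := by
  intro x hx
  obtain ⟨k, hk⟩ := (Module.End.mem_maxGenEigenspace _ _ _).mp hx
  refine ⟨0, ?_⟩
  simp_rw [exp_smul_mulVec_of_mem_genEigenspace (Module.End.mem_genEigenspace_nat.mpr hk)]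
  simpa using tendsto_finsetSum (Finset.range k) fun j _ =>
    (tendsto_exp_mul_mul_pow_atTop_nhds_zero hμ j).smul_const
      ((j.factorial : ℂ)⁻¹ • ((B - μ • 1) ^ j *ᵥ x))

lemma maxGenEigenspace_zero_le_ker {R M : Type*} [CommRing R] [AddCommGroup M] [Module R M]
    {f : Module.End R M} (hf : ∀ x, f (f x) = 0 → f x = 0) :
    f.maxGenEigenspace 0 ≤ LinearMap.ker f := by
  intro x hx
  obtain ⟨k, hk⟩ := (Module.End.mem_maxGenEigenspace _ _ _).mp hx
  rw [zero_smul, sub_zero] at hk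
  induction k with
  | zero => simp_all
  | succ k ih => cases k with
    | zero => simpa using hk
    | succ k =>
      rw [pow_succ', Module.End.mul_apply, pow_succ', Module.End.mul_apply] at hk
      exact ih (by simpa only [pow_succ', Module.End.mul_apply] using hf _ hk)

lemma convergentVectors_eq_top {B : Matrix N N ℂ}
    (h_ker : ∀ x, B *ᵥ (B *ᵥ x) = 0 → B *ᵥ x = 0)
    (h_eig : ∀ μ, Module.End.HasEigenvalue (toLin' B) μ → μ = 0 ∨ μ.re < 0) :
    convergentVectors B = ⊤ := by
  rw [eq_top_iff, ← Module.End.iSup_maxGenEigenspace_eq_top (toLin' B)]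
  refine iSup_le fun μ => ?_
  by_cases hμ : Module.End.HasEigenvalue (toLin' B) μ
  · rcases h_eig μ hμ with rfl | h_neg
    · exact (maxGenEigenspace_zero_le_ker h_ker).trans (ker_toLin'_le_convergentVectors B)
    · exact maxGenEigenspace_le_convergentVectors B h_neg
  · have h_bot : Module.End.maxGenEigenspace (toLin' B) μ = ⊥ := not_not.mp fun h =>
      hμ ((Module.End.hasUnifEigenvalue_iff_hasUnifEigenvalue_one ENat.top_pos).mp h)
    exact h_bot.trans_le bot_le

open scoped Matrix.Norms.Operator in
lemma exp_map_algebraMap_complex (A : Matrix N N ℝ) :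
    (NormedSpace.exp A).map (algebraMap ℝ ℂ) = NormedSpace.exp (A.map (algebraMap ℝ ℂ)) :=
  NormedSpace.map_exp (algebraMap ℝ ℂ).mapMatrix
    (continuous_id.matrix_map (continuous_algebraMap ℝ ℂ)) A

theorem isSemistable_of_ker_sq_le_of_eigenvalues {A : Matrix N N ℝ}
    (h_ker : ∀ x, A *ᵥ (A *ᵥ x) = 0 → A *ᵥ x = 0)
    (h_eig : ∀ μ : ℂ, Module.End.HasEigenvalue (toLin' (A.map (algebraMap ℝ ℂ))) μ →
      μ = 0 ∨ μ.re < 0) :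
    IsSemistable A := by
  set B := A.map (algebraMap ℝ ℂ) with hB
  have h_ker_B : ∀ z, B *ᵥ (B *ᵥ z) = 0 → B *ᵥ z = 0 := by
    simp only [hB, map_mulVec_eq_zero_iff, re_comp_map_mulVec, im_comp_map_mulVec]
    exact fun z hz => ⟨h_ker _ hz.1, h_ker _ hz.2⟩
  intro x
  obtain ⟨y, hy⟩ : Complex.ofReal ∘ x ∈ convergentVectors B := by
    rw [convergentVectors_eq_top h_ker_B h_eig]
    trivial
  refine ⟨Complex.re ∘ y, ?_⟩
  have h_re : Continuous fun z : N → ℂ => Complex.re ∘ z := by fun_prop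
  refine ((h_re.tendsto y).comp hy).congr fun t => ?_
  rw [Function.comp_apply, hB, ← Complex.coe_smul, ← map_algebraMap_smul,
    ← exp_map_algebraMap_complex, re_comp_map_mulVec]
  rfl

end Semistability

section QuadraticRoots

lemma re_neg_of_complex_quadratic {a A B p q : ℝ} {z : ℂ} (ha : 0 < a) (hA : 0 < A)
    (h : a * q ^ 2 < A * (A * p + B * q))
    (hz : a * z ^ 2 + (⟨A, B⟩ : ℂ) * z + ⟨p, q⟩ = 0) : z.re < 0 := by
  by_contra! hs
  set s := z.re
  set ω := z.im
  have h_re : a * (s ^ 2 - ω ^ 2) + A * s - B * ω + p = 0 := by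
    have := congrArg Complex.re hz
    simp only [pow_two, Complex.add_re, Complex.mul_re, Complex.mul_im, Complex.ofReal_re,
      Complex.ofReal_im, Complex.zero_re] at this
    linear_combination this
  have h_im : ω * (2 * a * s + A) = -(q + s * B) := by
    have := congrArg Complex.im hz
    simp only [pow_two, Complex.add_im, Complex.mul_re, Complex.mul_im, Complex.ofReal_re,
      Complex.ofReal_im, Complex.zero_im] at this
    linear_combination this
  -- `(2as + A)²` times `h_re`, with `ω` eliminated by `h_im`.
  have h_elim : A * (A * p + B * q) - a * q ^ 2
      + s * (a * s + A) * ((2 * a * s + A) ^ 2 + B ^ 2 + 4 * a * p) = 0 := by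
    linear_combination (2 * a * s + A) ^ 2 * h_re
      + (a * (ω * (2 * a * s + A) - (q + s * B)) + B * (2 * a * s + A)) * h_im
  have h_disc : 0 ≤ A ^ 2 + B ^ 2 + 4 * a * p := by
    refine (mul_nonneg_iff_of_pos_left (show 0 < A ^ 2 by positivity)).mp ?_
    calc 0 ≤ A ^ 4 + (2 * a * q - A * B) ^ 2 := by positivity
      _ = A ^ 2 * (A ^ 2 + B ^ 2) + 4 * a * (a * q ^ 2 - A * (B * q)) := by ring
      _ ≤ A ^ 2 * (A ^ 2 + B ^ 2) + 4 * a * (A * (A * p)) := by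
        gcongr
        linarith
      _ = A ^ 2 * (A ^ 2 + B ^ 2 + 4 * a * p) := by ring
  have h_as : 0 ≤ a * s := by positivity
  have h_nonneg : 0 ≤ s * (a * s + A) * ((2 * a * s + A) ^ 2 + B ^ 2 + 4 * a * p) :=
    mul_nonneg (by positivity) (by nlinarith)
  linarith

lemma eq_zero_or_re_neg_of_quadratic {a b r ν θ : ℝ} {m z : ℂ} (ha : 0 < a) (hr : 0 ≤ r)
    (hν : 0 ≤ ν) (hb : ν * m.re ≤ b) (hm : |θ * m.im| ≤ m.re)
    (hab : a < ((ν + r) * θ ^ 2 + r) * b) (hz : a * z ^ 2 + (b + r * m) * z + m = 0) :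
    z = 0 ∨ z.re < 0 := by
  have hp : 0 ≤ m.re := (abs_nonneg _).trans hm
  have hb_pos : 0 < b := pos_of_mul_pos_right (ha.trans hab) (by positivity)
  set A := b + r * m.re with hA_def
  have hA : b ≤ A := le_add_of_nonneg_right (by positivity)
  have hz' : a * z ^ 2 + (⟨A, r * m.im⟩ : ℂ) * z + ⟨m.re, m.im⟩ = 0 := by
    convert hz using 3
    apply Complex.ext <;> simp [hA_def]
  rcases eq_or_ne m.im 0 with hq | hq
  · rcases hp.eq_or_lt with hp0 | hp_pos
    · have h_m : m = 0 := Complex.ext hp0.symm hq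
      have h_factor : z * (a * z + b) = 0 := by
        rw [h_m] at hz
        linear_combination hz
      refine (mul_eq_zero.mp h_factor).imp_right fun h_lin => ?_
      have h_re : a * z.re + b = 0 := by simpa using congrArg Complex.re h_lin
      exact neg_of_mul_neg_right (by linarith) ha.le
    · have hA_pos : 0 < A := hb_pos.trans_le hA
      refine .inr (re_neg_of_complex_quadratic ha hA_pos ?_ hz')
      rw [hq]
      simp only [ne_eq, OfNat.ofNat_ne_zero, not_false_eq_true, zero_pow, mul_zero, add_zero]
      positivity
  · refine .inr (re_neg_of_complex_quadratic ha (hb_pos.trans_le hA) ?_ hz')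
    have h_sq : θ ^ 2 * m.im ^ 2 ≤ m.re ^ 2 := by
      rw [← mul_pow]
      exact sq_le_sq' (abs_le.mp hm).1 (abs_le.mp hm).2
    calc a * m.im ^ 2 < ((ν + r) * θ ^ 2 + r) * b * m.im ^ 2 := by gcongr
      _ ≤ ((ν + r) * θ ^ 2 + r) * A * m.im ^ 2 := by gcongr
      _ = A * ((ν + r) * (θ ^ 2 * m.im ^ 2) + r * m.im ^ 2) := by ring
      _ ≤ A * ((ν + r) * m.re ^ 2 + r * m.im ^ 2) := by gcongr
      _ = A * ((ν * m.re + r * m.re) * m.re + r * m.im * m.im) := by ring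
      _ ≤ A * (A * m.re + r * m.im * m.im) := by
        gcongr
        exact add_le_add_left hb _

end QuadraticRoots

section ComplexForm

variable {N : Type*} [Fintype N]

/-- The sesquilinear form `w* S w` of a real matrix `S`, evaluated at a complex vector `w`. It turns
a matrix equation for a complex eigenvector into a scalar one. -/
noncomputable def complexForm (S : Matrix N N ℝ) (w : N → ℂ) : ℂ :=
  star w ⬝ᵥ (S.map (algebraMap ℝ ℂ) *ᵥ w)

lemma complexForm_add (S T : Matrix N N ℝ) (w : N → ℂ) :
    complexForm (S + T) w = complexForm S w + complexForm T w := by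
  simp only [complexForm, Matrix.map_add _ (map_add (algebraMap ℝ ℂ)), add_mulVec, dotProduct_add]

lemma complexForm_sub (S T : Matrix N N ℝ) (w : N → ℂ) :
    complexForm (S - T) w = complexForm S w - complexForm T w := by
  simp only [complexForm, Matrix.map_sub _ (map_sub (algebraMap ℝ ℂ)), sub_mulVec, dotProduct_sub]

lemma complexForm_smul (c : ℝ) (S : Matrix N N ℝ) (w : N → ℂ) :
    complexForm (c • S) w = c * complexForm S w := by
  rw [complexForm, map_algebraMap_smul, smul_mulVec, dotProduct_smul, smul_eq_mul, complexForm]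

lemma complexForm_transpose (S : Matrix N N ℝ) (w : N → ℂ) :
    complexForm Sᵀ w = star (complexForm S w) := by
  have h_map : Sᵀ.map (algebraMap ℝ ℂ) = (S.map (algebraMap ℝ ℂ))ᴴ := by
    ext i j
    simp
  rw [complexForm, complexForm, h_map, star_dotProduct, star_mulVec, dotProduct_mulVec,
    conjTranspose_conjTranspose]

lemma re_complexForm (S : Matrix N N ℝ) (w : N → ℂ) :
    (complexForm S w).re = (Complex.re ∘ w) ⬝ᵥ (S *ᵥ (Complex.re ∘ w)) +
      (Complex.im ∘ w) ⬝ᵥ (S *ᵥ (Complex.im ∘ w)) := by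
  rw [← re_comp_map_mulVec, ← im_comp_map_mulVec]
  simp [complexForm, dotProduct, Finset.sum_add_distrib]

lemma im_complexForm (S : Matrix N N ℝ) (w : N → ℂ) :
    (complexForm S w).im = (Complex.re ∘ w) ⬝ᵥ (S *ᵥ (Complex.im ∘ w)) -
      (Complex.im ∘ w) ⬝ᵥ (S *ᵥ (Complex.re ∘ w)) := by
  rw [← re_comp_map_mulVec, ← im_comp_map_mulVec]
  simp [complexForm, dotProduct, Finset.sum_add_distrib, sub_eq_add_neg]

lemma im_complexForm_eq_zero_of_isSymm {S : Matrix N N ℝ} (hS : S.IsSymm) (w : N → ℂ) :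
    (complexForm S w).im = 0 := by
  rw [← Complex.conj_eq_iff_im, starRingEnd_apply, ← complexForm_transpose, hS.eq]

lemma re_complexForm_nonneg {S : Matrix N N ℝ} (hS : S.PosSemidef) (w : N → ℂ) :
    0 ≤ (complexForm S w).re := by
  rw [re_complexForm]
  exact add_nonneg (hS.dotProduct_mulVec_nonneg _) (hS.dotProduct_mulVec_nonneg _)

lemma re_complexForm_diagonal [DecidableEq N] (d : N → ℝ) (w : N → ℂ) :
    (complexForm (diagonal d) w).re = ∑ i, d i * Complex.normSq (w i) := by
  simp only [re_complexForm, dotProduct, mulVec_diagonal, Function.comp_apply,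
    ← Finset.sum_add_distrib, Complex.normSq_apply]
  exact Finset.sum_congr rfl fun i _ => by ring

lemma re_complexForm_diagonal_lt [DecidableEq N] {d e : N → ℝ} (hde : ∀ i, d i < e i)
    {w : N → ℂ} (hw : w ≠ 0) :
    (complexForm (diagonal d) w).re < (complexForm (diagonal e) w).re := by
  obtain ⟨k, hk⟩ := Function.ne_iff.mp hw
  simp only [re_complexForm_diagonal]
  exact Finset.sum_lt_sum
    (fun i _ => mul_le_mul_of_nonneg_right (hde i).le (Complex.normSq_nonneg _))
    ⟨k, Finset.mem_univ k, mul_lt_mul_of_pos_right (hde k) (Complex.normSq_pos.mpr hk)⟩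

lemma dotProduct_fromBlocks_symm_skew_mulVec (s : ℝ) (M : Matrix N N ℝ) (w : N → ℂ) :
    Sum.elim (Complex.re ∘ w) (Complex.im ∘ w) ⬝ᵥ
      (fromBlocks ((1 / 2 : ℝ) • (M + Mᵀ)) (s • ((1 / 2 : ℝ) • (M - Mᵀ)))
        (s • ((1 / 2 : ℝ) • (M - Mᵀ))ᵀ) ((1 / 2 : ℝ) • (M + Mᵀ)) *ᵥ
        Sum.elim (Complex.re ∘ w) (Complex.im ∘ w)) =
      (complexForm M w).re + s * (complexForm M w).im := by
  have h_transpose (x y : N → ℝ) : x ⬝ᵥ (Mᵀ *ᵥ y) = y ⬝ᵥ (M *ᵥ x) := by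
    rw [mulVec_transpose, dotProduct_comm, dotProduct_mulVec]
  simp only [fromBlocks_mulVec, Sum.elim_comp_inl, Sum.elim_comp_inr, sumElim_dotProduct_sumElim,
    transpose_smul, transpose_sub, transpose_transpose, smul_mulVec, add_mulVec, sub_mulVec,
    dotProduct_add, dotProduct_sub, dotProduct_smul, smul_eq_mul, h_transpose, re_complexForm,
    im_complexForm]
  ring

lemma IsAdmissible.abs_mul_im_complexForm_le {n : ℕ} {θ : ℝ} {M : Matrix (Fin n) (Fin n) ℝ}
    (h : IsAdmissible θ M) (w : Fin n → ℂ) :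
    |θ * (complexForm M w).im| ≤ (complexForm M w).re := by
  obtain ⟨-, h_pos, h_neg⟩ := h
  have h_add := h_pos.dotProduct_mulVec_nonneg (Sum.elim (Complex.re ∘ w) (Complex.im ∘ w))
  have h_sub := h_neg.dotProduct_mulVec_nonneg (Sum.elim (Complex.re ∘ w) (Complex.im ∘ w))
  rw [star_trivial, dotProduct_fromBlocks_symm_skew_mulVec] at h_add h_sub
  exact abs_le.mpr ⟨by linarith, by linarith⟩

lemma eq_zero_or_re_neg_of_quadratic_pencil {n : ℕ} {d e : Fin n → ℝ}
    {P M : Matrix (Fin n) (Fin n) ℝ} {r ν θ : ℝ} (hd : ∀ i, 0 < d i) (hr : 0 ≤ r) (hν : 0 ≤ ν)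
    (hP : P.PosSemidef)
    (hpsd : (diagonal e + P - ν • ((1 / 2 : ℝ) • (M + Mᵀ))).PosSemidef)
    (hθ : IsAdmissible θ M) (hde : ∀ i, d i < ((ν + r) * θ ^ 2 + r) * e i)
    {μ : ℂ} {w : Fin n → ℂ} (hw : w ≠ 0)
    (h : μ ^ 2 * complexForm (diagonal d) w
      + μ * (complexForm (diagonal e + P) w + r * complexForm M w) + complexForm M w = 0) :
    μ = 0 ∨ μ.re < 0 := by
  have h_real {S : Matrix (Fin n) (Fin n) ℝ} (hS : S.IsSymm) :
      ((complexForm S w).re : ℂ) = complexForm S w :=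
    Complex.ext rfl (im_complexForm_eq_zero_of_isSymm hS w).symm
  have hP_symm : P.IsSymm := by
    rw [IsSymm, ← conjTranspose_eq_transpose_of_trivial, hP.isHermitian]
  have h_d_pos : 0 < (complexForm (diagonal d) w).re := by
    simpa [complexForm] using re_complexForm_diagonal_lt hd hw
  have h_gain : (complexForm (diagonal d) w).re <
      ((ν + r) * θ ^ 2 + r) * (complexForm (diagonal e + P) w).re := by
    calc (complexForm (diagonal d) w).re
      _ < (complexForm (diagonal fun i => ((ν + r) * θ ^ 2 + r) * e i) w).re :=
          re_complexForm_diagonal_lt hde hw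
      _ = ((ν + r) * θ ^ 2 + r) * (complexForm (diagonal e) w).re := by
          simp only [re_complexForm_diagonal, Finset.mul_sum, mul_assoc]
      _ ≤ ((ν + r) * θ ^ 2 + r) * (complexForm (diagonal e + P) w).re := by
          rw [complexForm_add, Complex.add_re]
          gcongr
          exact le_add_of_nonneg_right (re_complexForm_nonneg hP w)
  have h_ν : ν * (complexForm M w).re ≤ (complexForm (diagonal e + P) w).re := by
    have := re_complexForm_nonneg hpsd w
    simp only [complexForm_sub, complexForm_smul, complexForm_add _ Mᵀ, complexForm_transpose,
      Complex.sub_re, Complex.re_ofReal_mul, Complex.add_re, Complex.star_def,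
      Complex.conj_re] at this
    linarith
  refine eq_zero_or_re_neg_of_quadratic h_d_pos hr hν h_ν (hθ.abs_mul_im_complexForm_le w)
    h_gain ?_
  rw [h_real (isSymm_diagonal d), h_real ((isSymm_diagonal e).add hP_symm)]
  linear_combination h

end ComplexForm

section LaplacianAlgebra

variable {N K : Type*} [Fintype N]

lemma sum_col_eq_zero_of_isSymm [AddCommMonoid K] {W : Matrix N N K}
    (hsymm : W.IsSymm) (hrow : ∀ i, ∑ j, W i j = 0) (j : N) :
    ∑ i, W i j = 0 :=
  (Finset.sum_congr rfl fun i _ => hsymm.apply j i).trans (hrow j)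

lemma mulVec_one_eq_zero [NonAssocSemiring K] {W : Matrix N N K}
    (hrow : ∀ i, ∑ j, W i j = 0) : W *ᵥ 1 = 0 := by
  funext i
  simpa [mulVec, dotProduct] using hrow i

lemma diagonal_add_mulVec_one [DecidableEq N] [NonAssocSemiring K] {G : N → K}
    {W : Matrix N N K} (hrow : ∀ i, ∑ j, W i j = 0) : (diagonal G + W) *ᵥ 1 = G := by
  rw [add_mulVec, mulVec_one_eq_zero hrow, add_zero]
  funext i
  simp [mulVec_diagonal]

lemma inv_dotProduct_diagonal_mul_mulVec [DecidableEq N] [Field K] {W : Matrix N N K}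
    (hcol : ∀ j, ∑ i, W i j = 0) {b : N → K}
    (hb : ∀ i, b i ≠ 0) (x : N → K) : b⁻¹ ⬝ᵥ ((diagonal b * W) *ᵥ x) = 0 := by
  have h_inv : b⁻¹ ᵥ* diagonal b = 1 := by
    funext i
    rw [vecMul_diagonal, Pi.inv_apply, inv_mul_cancel₀ (hb i), Pi.one_apply]
  have h_col : 1 ᵥ* W = 0 := by
    funext j
    simpa [vecMul, dotProduct] using hcol j
  rw [dotProduct_mulVec, ← vecMul_vecMul, h_inv, h_col, zero_dotProduct]

lemma exists_eq_smul_one_of_mulVec_eq_zero [Field K] {W : Matrix N N K}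
    (hrow : ∀ i, ∑ j, W i j = 0)
    (hrank : W.rank = Fintype.card N - 1) {x : N → K} (hx : W *ᵥ x = 0) :
    ∃ c : K, x = c • 1 := by
  cases isEmpty_or_nonempty N
  · exact ⟨0, Subsingleton.elim _ _⟩
  have h_finrank : Module.finrank K (LinearMap.ker W.mulVecLin) = 1 := by
    have := LinearMap.finrank_range_add_finrank_ker W.mulVecLin
    rw [← Matrix.rank, hrank, Module.finrank_fintype_fun_eq_card] at this
    have := Fintype.card_pos (α := N)
    omega
  have h_ne : (⟨1, mulVec_one_eq_zero hrow⟩ : LinearMap.ker W.mulVecLin) ≠ 0 :=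
    fun h => one_ne_zero (congrArg Subtype.val h)
  obtain ⟨c, hc⟩ := (finrank_eq_one_iff_of_nonzero' _ h_ne).mp h_finrank ⟨x, hx⟩
  exact ⟨c, (congrArg Subtype.val hc).symm⟩

lemma isUnit_diagonal_of_ne_zero [DecidableEq N] [Field K] {d : N → K} (hd : ∀ i, d i ≠ 0) :
    IsUnit (diagonal d) :=
  isUnit_diagonal.mpr (Pi.isUnit_iff.mpr fun i => (hd i).isUnit)

end LaplacianAlgebra

section MinimumPrinciple

variable {N K : Type*} [Fintype N] [Field K] [LinearOrder K] [IsStrictOrderedRing K]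

lemma eq_zero_of_dotProduct_smul_one_eq_zero [Nonempty N] {b : N → K} (hb : ∀ i, 0 < b i) {c : K}
    (h : b ⬝ᵥ (c • 1) = 0) : c = 0 := by
  rw [dotProduct_smul, dotProduct_one, smul_eq_mul] at h
  exact (mul_eq_zero.mp h).resolve_right
    (Finset.sum_pos (fun i _ => hb i) Finset.univ_nonempty).ne'

variable [DecidableEq N] {G : N → K} {W : Matrix N N K}

lemma pos_of_diagonal_add_mulVec_pos (hG : ∀ i, 0 ≤ G i) (hoff : ∀ i j, i ≠ j → W i j ≤ 0)
    (hrow : ∀ i, ∑ j, W i j = 0) {x : N → K} (hx : ∀ i, 0 < ((diagonal G + W) *ᵥ x) i) (i : N) :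
    0 < x i := by
  obtain ⟨k, -, hk⟩ := Finset.exists_min_image Finset.univ x ⟨i, Finset.mem_univ i⟩
  have h_flow : (W *ᵥ x) k ≤ 0 := by
    have h_diff : (W *ᵥ x) k = ∑ j, W k j * (x j - x k) := by
      simp [mulVec, dotProduct, mul_sub, ← Finset.sum_mul, hrow]
    rw [h_diff]
    refine Finset.sum_nonpos fun j hj => ?_
    rcases eq_or_ne k j with rfl | hkj
    · simp
    · exact mul_nonpos_of_nonpos_of_nonneg (hoff k j hkj) (sub_nonneg.mpr (hk j hj))
  have h_pos : 0 < G k * x k := by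
    have := hx k
    rw [add_mulVec, Pi.add_apply, mulVec_diagonal] at this
    linarith
  exact (pos_of_mul_pos_right h_pos (hG k)).trans_le (hk i (Finset.mem_univ i))

lemma eq_zero_of_diagonal_add_mulVec_eq_smul [Nonempty N] (hG : ∀ i, 0 ≤ G i)
    (hoff : ∀ i j, i ≠ j → W i j ≤ 0) (hrow : ∀ i, ∑ j, W i j = 0) {b e x : N → K} {c : K}
    (hb : ∀ i, 0 < b i) (he : ∀ i, 0 < e i) (hx : (diagonal G + W) *ᵥ x = c • e)
    (hbx : b ⬝ᵥ x = 0) : c = 0 := by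
  have h_nonpos {x : N → K} {c : K} (hx : (diagonal G + W) *ᵥ x = c • e) (hbx : b ⬝ᵥ x = 0) :
      c ≤ 0 := by
    by_contra! hc
    have h_pos : ∀ i, 0 < x i := pos_of_diagonal_add_mulVec_pos hG hoff hrow fun i => by
      rw [hx]
      exact mul_pos hc (he i)
    exact (Finset.sum_pos (fun i _ => mul_pos (hb i) (h_pos i)) Finset.univ_nonempty).ne' hbx
  refine le_antisymm (h_nonpos hx hbx) (neg_nonpos.mp (h_nonpos (x := -x) ?_ ?_))
  · rw [mulVec_neg, hx, neg_smul]
  · rw [dotProduct_neg, hbx, neg_zero]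

end MinimumPrinciple

section RealLaplacian

variable {N : Type*} [Fintype N] {W : Matrix N N ℝ}

lemma dotProduct_mulVec_eq_sum_sq_sub (hsymm : W.IsSymm) (hrow : ∀ i, ∑ j, W i j = 0)
    (x : N → ℝ) :
    x ⬝ᵥ (W *ᵥ x) = -(1 / 2) * ∑ i, ∑ j, W i j * (x i - x j) ^ 2 := by
  have h_expand (i j : N) : W i j * (x i - x j) ^ 2 =
      W i j * x i ^ 2 + W i j * x j ^ 2 - 2 * (x i * (W i j * x j)) := by ring
  simp_rw [h_expand, Finset.sum_sub_distrib, Finset.sum_add_distrib]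
  rw [Finset.sum_comm (f := fun i j => W i j * x j ^ 2)]
  simp_rw [← Finset.sum_mul, hrow, sum_col_eq_zero_of_isSymm hsymm hrow, ← Finset.mul_sum,
    dotProduct, mulVec, dotProduct]
  simp

lemma posSemidef_of_offDiag_nonpos (hsymm : W.IsSymm) (hoff : ∀ i j, i ≠ j → W i j ≤ 0)
    (hrow : ∀ i, ∑ j, W i j = 0) : W.PosSemidef := by
  refine PosSemidef.of_dotProduct_mulVec_nonneg ?_ fun x => ?_
  · rwa [IsHermitian, conjTranspose_eq_transpose_of_trivial]
  · rw [star_trivial, dotProduct_mulVec_eq_sum_sq_sub hsymm hrow]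
    refine mul_nonneg_of_nonpos_of_nonpos (by norm_num)
      (Finset.sum_nonpos fun i _ => Finset.sum_nonpos fun j _ => ?_)
    rcases eq_or_ne i j with rfl | hij
    · simp
    · exact mul_nonpos_of_nonpos_of_nonneg (hoff i j hij) (sq_nonneg _)

variable [DecidableEq N] {G : N → ℝ}

lemma exists_eq_smul_one_of_diagonal_add_mulVec_eq_zero (hG : ∀ i, 0 ≤ G i) (hsymm : W.IsSymm)
    (hoff : ∀ i j, i ≠ j → W i j ≤ 0) (hrow : ∀ i, ∑ j, W i j = 0)
    (hrank : W.rank = Fintype.card N - 1) {x : N → ℝ} (hx : (diagonal G + W) *ᵥ x = 0) :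
    ∃ c : ℝ, x = c • 1 := by
  have hW := posSemidef_of_offDiag_nonpos hsymm hoff hrow
  have h_sum : x ⬝ᵥ (diagonal G *ᵥ x) + x ⬝ᵥ (W *ᵥ x) = 0 := by
    rw [← dotProduct_add, ← add_mulVec, hx, dotProduct_zero]
  have h_diag : 0 ≤ x ⬝ᵥ (diagonal G *ᵥ x) := (PosSemidef.diagonal hG).dotProduct_mulVec_nonneg x
  have h_lap : 0 ≤ x ⬝ᵥ (W *ᵥ x) := hW.dotProduct_mulVec_nonneg x
  refine exists_eq_smul_one_of_mulVec_eq_zero hrow hrank ((hW.dotProduct_mulVec_zero_iff x).mp ?_)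
  rw [star_trivial]
  linarith

lemma eq_zero_and_eq_zero_of_equilibrium {L : Matrix N N ℝ} {b e p q : N → ℝ} {u : ℝ}
    (hG : ∀ i, 0 ≤ G i) (hsymm : W.IsSymm) (hoff : ∀ i j, i ≠ j → W i j ≤ 0)
    (hrow : ∀ i, ∑ j, W i j = 0) (hrank : W.rank = Fintype.card N - 1)
    (hLrow : ∀ i, ∑ j, L i j = 0) (hLrank : L.rank = Fintype.card N - 1)
    (hb : ∀ i, 0 < b i) (he : ∀ i, 0 < e i) (hu : 0 ≤ u) (hp : L *ᵥ p = 0)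
    (hpq : (diagonal G + W) *ᵥ (q - u • p) = diagonal e *ᵥ p) (hq : b ⬝ᵥ q = 0) :
    p = 0 ∧ q = 0 := by
  cases isEmpty_or_nonempty N
  · exact ⟨Subsingleton.elim _ _, Subsingleton.elim _ _⟩
  obtain ⟨c, rfl⟩ := exists_eq_smul_one_of_mulVec_eq_zero hLrow hLrank hp
  have h_Yq : (diagonal G + W) *ᵥ q = c • (e + u • G) := by
    have h_one : diagonal e *ᵥ 1 = e := by
      ext i
      simp [mulVec_diagonal]
    rw [mulVec_sub, mulVec_smul, mulVec_smul, mulVec_smul, diagonal_add_mulVec_one hrow, h_one,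
      sub_eq_iff_eq_add] at hpq
    rw [hpq]
    module
  obtain rfl : c = 0 := eq_zero_of_diagonal_add_mulVec_eq_smul hG hoff hrow hb
    (fun i => add_pos_of_pos_of_nonneg (he i) (mul_nonneg hu (hG i))) h_Yq hq
  obtain ⟨c', rfl⟩ := exists_eq_smul_one_of_diagonal_add_mulVec_eq_zero hG hsymm hoff hrow hrank
    (h_Yq.trans (zero_smul _ _))
  obtain rfl : c' = 0 := eq_zero_of_dotProduct_smul_one_eq_zero hb hq
  exact ⟨zero_smul _ _, zero_smul _ _⟩

end RealLaplacian

section ClosedLoop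

variable {N : Type*} [Fintype N] [DecidableEq N]

/-- The closed-loop matrix of the distributed cooperative droop control, over an arbitrary field
so that it can be complexified. -/
noncomputable def closedLoop {K : Type*} [Field K] (D R Y L Υ Ψ Φ : Matrix N N K) :
    Matrix (N ⊕ N) (N ⊕ N) K :=
  fromBlocks (-(D⁻¹ * (1 + Y * R))) (D⁻¹ * Y)
    (-(Ψ * L * Υ⁻¹) + Φ * L * Υ⁻¹ * D⁻¹ * (1 + Y * R)) (-(Φ * L * Υ⁻¹ * D⁻¹ * Y))

lemma map_nonsing_inv {K F : Type*} [Field K] [Field F] (f : K →+* F) (A : Matrix N N K) :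
    A⁻¹.map f = (A.map f)⁻¹ := by
  rw [inv_def, inv_def, Ring.inverse_eq_inv', Ring.inverse_eq_inv', ← RingHom.mapMatrix_apply,
    ← RingHom.mapMatrix_apply, ← RingHom.map_adjugate, ← RingHom.map_det, ← map_inv₀]
  ext i j
  simp

lemma closedLoop_map {K F : Type*} [Field K] [Field F] (f : K →+* F)
    (D R Y L Υ Ψ Φ : Matrix N N K) :
    (closedLoop D R Y L Υ Ψ Φ).map f =
      closedLoop (D.map f) (R.map f) (Y.map f) (L.map f) (Υ.map f) (Ψ.map f) (Φ.map f) := by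
  simp only [closedLoop, fromBlocks_map, ← map_nonsing_inv]
  simp only [← RingHom.mapMatrix_apply, map_neg, map_add, map_mul, map_one]

section Field

variable {K : Type*} [Field K] {D R Y L Υ Ψ Φ : Matrix N N K} {u r : K}

lemma exists_eq_sumElim_mulVec (hΥ : IsUnit Υ) (z : N ⊕ N → K) :
    ∃ w v, z = Sum.elim (Υ *ᵥ w) v := by
  refine ⟨Υ⁻¹ *ᵥ (z ∘ Sum.inl), z ∘ Sum.inr, ?_⟩
  rw [mulVec_mulVec, mul_nonsing_inv _ ((isUnit_iff_isUnit_det _).mp hΥ), one_mulVec,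
    Sum.elim_comp_inl_inr]

-- Measuring the currents in units of their maxima turns all droop gains into the scalar `u`.
lemma closedLoop_mulVec_sumElim (hD : IsUnit D) (hΥ : IsUnit Υ) (hR : R * Υ = u • 1)
    (hΦ : Φ = r • Ψ) {w v p q : N → K}
    (h : closedLoop D R Y L Υ Ψ Φ *ᵥ Sum.elim (Υ *ᵥ w) v = Sum.elim (Υ *ᵥ p) q) :
    (D * Υ) *ᵥ p = Y *ᵥ (v - u • w) - Υ *ᵥ w ∧ q = -((Ψ * L) *ᵥ (w + r • p)) := by
  rw [isUnit_iff_isUnit_det] at hD hΥ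
  have h_droop : (1 + Y * R) *ᵥ (Υ *ᵥ w) = Υ *ᵥ w + u • (Y *ᵥ w) := by
    rw [add_mulVec, one_mulVec, mulVec_mulVec, mul_assoc, hR, mul_smul_one, smul_mulVec]
  rw [closedLoop, fromBlocks_mulVec, Sum.elim_comp_inl, Sum.elim_comp_inr,
    Sum.elim_eq_iff] at h
  obtain ⟨h_current, h_voltage⟩ := h
  have h_p : Υ *ᵥ p = D⁻¹ *ᵥ (Y *ᵥ v - (Υ *ᵥ w + u • (Y *ᵥ w))) := by
    rw [← h_current, neg_mulVec, ← mulVec_mulVec, h_droop, ← mulVec_mulVec, mulVec_sub]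
    abel
  constructor
  · rw [← mulVec_mulVec, h_p, mulVec_mulVec, mul_nonsing_inv _ hD, one_mulVec, mulVec_sub,
      mulVec_smul]
    abel
  · have h_cancel (M : Matrix N N K) (x : N → K) : (M * Υ⁻¹) *ᵥ (Υ *ᵥ x) = M *ᵥ x := by
      rw [mulVec_mulVec, mul_assoc, nonsing_inv_mul _ hΥ, mul_one]
    calc q = -((Ψ * L * Υ⁻¹) *ᵥ (Υ *ᵥ w)) - (Φ * L * Υ⁻¹) *ᵥ
          (-(D⁻¹ * (1 + Y * R)) *ᵥ (Υ *ᵥ w) + (D⁻¹ * Y) *ᵥ v) := by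
          rw [← h_voltage]
          simp only [add_mulVec, neg_mulVec, mulVec_add, mulVec_neg, ← mulVec_mulVec]
          abel
      _ = -((Ψ * L) *ᵥ w) - (Φ * L) *ᵥ p := by
          rw [h_current, h_cancel, h_cancel]
      _ = -((Ψ * L) *ᵥ (w + r • p)) := by
          rw [hΦ, smul_mul_assoc, smul_mulVec, mulVec_add, mulVec_smul]
          abel

lemma exists_quadratic_pencil_mulVec_eq_zero (hD : IsUnit D) (hΥ : IsUnit Υ)
    (hR : R * Υ = u • 1) (hΦ : Φ = r • Ψ) {μ : K} (hμ : μ ≠ 0) {z : N ⊕ N → K} (hz : z ≠ 0)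
    (h_eig : closedLoop D R Y L Υ Ψ Φ *ᵥ z = μ • z) :
    ∃ w ≠ 0, (μ ^ 2 • (D * Υ) + μ • (Υ + u • Y + r • (Y * Ψ * L)) + Y * Ψ * L) *ᵥ w = 0 := by
  obtain ⟨w, v, rfl⟩ := exists_eq_sumElim_mulVec hΥ z
  have h_smul : μ • Sum.elim (Υ *ᵥ w) v = Sum.elim (Υ *ᵥ (μ • w)) (μ • v) := by
    ext (i | i) <;> simp [mulVec_smul]
  obtain ⟨h_p, h_q⟩ := closedLoop_mulVec_sumElim hD hΥ hR hΦ (h_eig.trans h_smul)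
  refine ⟨w, ?_, ?_⟩
  · rintro rfl
    have h_v : v = 0 := by simpa [hμ] using h_q
    exact hz (by simp [h_v])
  · have h_v : μ • (Y *ᵥ v) = -((Y * Ψ * L) *ᵥ (w + r • μ • w)) := by
      rw [← mulVec_smul, h_q, mulVec_neg, mulVec_mulVec, mul_assoc]
    calc (μ ^ 2 • (D * Υ) + μ • (Υ + u • Y + r • (Y * Ψ * L)) + Y * Ψ * L) *ᵥ w
      _ = μ • ((D * Υ) *ᵥ (μ • w)) + μ • (Υ *ᵥ w + u • (Y *ᵥ w))
          + (Y * Ψ * L) *ᵥ (w + r • μ • w) := by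
          simp only [add_mulVec, smul_mulVec, mulVec_add, mulVec_smul]
          module
      _ = 0 := by
          rw [h_p, ← neg_eq_iff_eq_neg.mpr h_v, mulVec_sub, mulVec_smul]
          module

end Field

lemma closedLoop_mulVec_eq_zero_of_mulVec_mulVec {τ Imax β G : N → ℝ} {R W L : Matrix N N ℝ}
    {A : Matrix (N ⊕ N) (N ⊕ N) ℝ} {u r : ℝ}
    (hτ : ∀ i, 0 < τ i) (hImax : ∀ i, 0 < Imax i) (hβ : ∀ i, 0 < β i) (hG : ∀ i, 0 ≤ G i)
    (hWsymm : W.IsSymm) (hWoff : ∀ i j, i ≠ j → W i j ≤ 0) (hWrow : ∀ i, ∑ j, W i j = 0)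
    (hWrank : W.rank = Fintype.card N - 1) (hLrow : ∀ i, ∑ j, L i j = 0)
    (hLcol : ∀ j, ∑ i, L i j = 0) (hLrank : L.rank = Fintype.card N - 1) (hu : 0 ≤ u)
    (hR : R * diagonal Imax = u • 1)
    (hA : A = closedLoop (diagonal τ) R (diagonal G + W) L (diagonal Imax) (diagonal β)
      (r • diagonal β))
    {z : N ⊕ N → ℝ} (hz : A *ᵥ (A *ᵥ z) = 0) : A *ᵥ z = 0 := by
  have hD := isUnit_diagonal_of_ne_zero fun i => (hτ i).ne'
  have hΥ := isUnit_diagonal_of_ne_zero fun i => (hImax i).ne'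
  obtain ⟨w, v, rfl⟩ := exists_eq_sumElim_mulVec hΥ z
  obtain ⟨p, q, h_image⟩ := exists_eq_sumElim_mulVec hΥ (A *ᵥ Sum.elim (diagonal Imax *ᵥ w) v)
  have h_zero : A *ᵥ Sum.elim (diagonal Imax *ᵥ p) q = Sum.elim (diagonal Imax *ᵥ 0) 0 := by
    rw [← h_image, hz, mulVec_zero, Sum.elim_zero_zero]
  rw [h_image]
  subst hA
  obtain ⟨-, h_q⟩ := closedLoop_mulVec_sumElim hD hΥ hR rfl h_image
  obtain ⟨h_current, h_consensus⟩ := closedLoop_mulVec_sumElim hD hΥ hR rfl h_zero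
  have h_Lp : L *ᵥ p = 0 := by
    refine mulVec_injective_of_isUnit (isUnit_diagonal_of_ne_zero fun i => (hβ i).ne') ?_
    simpa using h_consensus
  have h_balance : β⁻¹ ⬝ᵥ q = 0 := by
    rw [h_q, dotProduct_neg, inv_dotProduct_diagonal_mul_mulVec hLcol fun i => (hβ i).ne', neg_zero]
  rw [mulVec_zero, eq_comm, sub_eq_zero] at h_current
  obtain ⟨rfl, rfl⟩ := eq_zero_and_eq_zero_of_equilibrium hG hWsymm hWoff hWrow hWrank hLrow hLrank
    (fun i => inv_pos.mpr (hβ i)) hImax hu h_Lp h_current h_balance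
  rw [mulVec_zero, Sum.elim_zero_zero]

theorem eq_zero_or_re_neg_of_hasEigenvalue_closedLoop {n : ℕ} {τ Imax : Fin n → ℝ}
    {R Y L Ψ : Matrix (Fin n) (Fin n) ℝ} {u r ν θ : ℝ} (hτ : ∀ i, 0 < τ i)
    (hImax : ∀ i, 0 < Imax i) (hu : 0 ≤ u) (hr : 0 ≤ r) (hν : 0 ≤ ν) (hY : Y.PosSemidef)
    (hR : R * diagonal Imax = u • 1)
    (hpsd : (diagonal Imax + u • Y
      - ν • ((1 / 2 : ℝ) • (Y * Ψ * L + (Y * Ψ * L)ᵀ))).PosSemidef)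
    (hθ : IsAdmissible θ (Y * Ψ * L)) (hgain : ∀ i, τ i < (ν + r) * θ ^ 2 + r) {μ : ℂ}
    (hμ : Module.End.HasEigenvalue (toLin' ((closedLoop (diagonal τ) R Y L (diagonal Imax) Ψ
      (r • Ψ)).map (algebraMap ℝ ℂ))) μ) :
    μ = 0 ∨ μ.re < 0 := by
  by_cases hμ0 : μ = 0
  · exact .inl hμ0
  obtain ⟨z, h_eig, hz⟩ := hμ.exists_hasEigenvector
  rw [Module.End.mem_eigenspace_iff, toLin'_apply, closedLoop_map] at h_eig
  have h_unit {A : Matrix (Fin n) (Fin n) ℝ} (hA : IsUnit A) : IsUnit (A.map (algebraMap ℝ ℂ)) :=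
    hA.map (algebraMap ℝ ℂ).mapMatrix
  have hD := h_unit (isUnit_diagonal_of_ne_zero fun i => (hτ i).ne')
  have hΥ := h_unit (isUnit_diagonal_of_ne_zero fun i => (hImax i).ne')
  have hR' : R.map (algebraMap ℝ ℂ) * (diagonal Imax).map (algebraMap ℝ ℂ) = (u : ℂ) • 1 := by
    rw [← Matrix.map_mul, hR, map_algebraMap_smul, Matrix.map_one _ (map_zero _) (map_one _)]
  obtain ⟨w, hw, h_pencil⟩ := exists_quadratic_pencil_mulVec_eq_zero hD hΥ hR'
    (map_algebraMap_smul r Ψ) hμ0 hz h_eig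
  refine eq_zero_or_re_neg_of_quadratic_pencil (fun i => mul_pos (hτ i) (hImax i)) hr hν
    (hY.smul hu) hpsd hθ (fun i => mul_lt_mul_of_pos_right (hgain i) (hImax i)) hw ?_
  have h_form := congrArg (star w ⬝ᵥ ·) h_pencil
  simp only [← Matrix.map_mul, add_mulVec, smul_mulVec, dotProduct_add, dotProduct_smul,
    dotProduct_zero, smul_eq_mul, diagonal_mul_diagonal] at h_form
  rw [complexForm_add, complexForm_smul]
  exact h_form

end ClosedLoop

theorem closedLoop_semistable_c1_general {n : ℕ} {Yc L : Matrix (Fin n) (Fin n) ℝ}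
    {G τ Rv Imax β α : Fin n → ℝ} {ubar rbar ν₁ θ : ℝ}
    (hYcsym : Yc.IsSymm) (hYcoff : ∀ i j, i ≠ j → Yc i j ≤ 0) (hYcrow : ∀ i, ∑ j, Yc i j = 0)
    (hYcrank : Yc.rank = n - 1)
    (hLrow : ∀ i, ∑ j, L i j = 0) (hLcol : ∀ j, ∑ i, L i j = 0) (hLrank : L.rank = n - 1)
    (hG : ∀ i, 0 ≤ G i) (hτ : ∀ i, 0 < τ i) (hImax : ∀ i, 0 < Imax i) (hβ : ∀ i, 0 < β i)
    (hubar : 0 ≤ ubar) (hrbar : 0 ≤ rbar) (hν₁ : 0 ≤ ν₁)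
    (hRI : ∀ i, Rv i * Imax i = ubar) (hαβ : ∀ i, α i = rbar * β i)
    (hpsd : (diagonal Imax + ubar • (diagonal G + Yc) - ν₁ • ((1 / 2 : ℝ) •
      ((diagonal G + Yc) * diagonal β * L + Lᵀ * diagonal β * (diagonal G + Yc)))).PosSemidef)
    (hθ : IsAdmissible θ ((diagonal G + Yc) * diagonal β * L))
    (hgain : ∀ i, τ i < (ν₁ + rbar) * θ ^ 2 + rbar) :
    IsSemistable (closedLoop (diagonal τ) (diagonal Rv) (diagonal G + Yc) L (diagonal Imax)
      (diagonal β) (diagonal α)) := by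
  have hR : diagonal Rv * diagonal Imax = ubar • 1 := by
    simp only [diagonal_mul_diagonal, hRI, smul_one_eq_diagonal]
  have hΦ : diagonal α = rbar • diagonal β := by
    rw [← diagonal_smul]
    exact congrArg diagonal (funext hαβ)
  have hY : (diagonal G + Yc).PosSemidef :=
    (PosSemidef.diagonal hG).add (posSemidef_of_offDiag_nonpos hYcsym hYcoff hYcrow)
  have h_transpose : ((diagonal G + Yc) * diagonal β * L)ᵀ
      = Lᵀ * diagonal β * (diagonal G + Yc) := by
    simp only [transpose_mul, transpose_add, diagonal_transpose, hYcsym.eq, mul_assoc]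
  have h_card : n - 1 = Fintype.card (Fin n) - 1 := by rw [Fintype.card_fin]
  rw [hΦ]
  exact isSemistable_of_ker_sq_le_of_eigenvalues
    (fun _ => closedLoop_mulVec_eq_zero_of_mulVec_mulVec hτ hImax hβ hG hYcsym hYcoff hYcrow
      (hYcrank.trans h_card) hLrow hLcol (hLrank.trans h_card) hubar hR rfl)
    (fun _ => eq_zero_or_re_neg_of_hasEigenvalue_closedLoop hτ hImax hubar hrbar hν₁ hY hR
      (h_transpose ▸ hpsd) hθ hgain)

/-- Sufficient condition c1) for semistability of the closed-loop matrix
`A_c` of the distributed cooperative droop control. -/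
theorem closedLoop_semistable_c1
    (n : ℕ) (hn : 2 ≤ n)
    (Yc L : Matrix (Fin n) (Fin n) ℝ)
    (hYcsym : Yc.IsSymm) (hLsym : L.IsSymm)
    (hYcoff : ∀ i j, i ≠ j → Yc i j ≤ 0) (hLoff : ∀ i j, i ≠ j → L i j ≤ 0)
    (hYcrow : ∀ i, ∑ j, Yc i j = 0) (hLrow : ∀ i, ∑ j, L i j = 0)
    (hYcrank : Yc.rank = n - 1) (hLrank : L.rank = n - 1)
    (G : Fin n → ℝ) (hG : ∀ i, 0 ≤ G i)
    (Ys : Matrix (Fin n) (Fin n) ℝ) (hYs : Ys = Matrix.diagonal G)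
    (Y : Matrix (Fin n) (Fin n) ℝ) (hY : Y = Ys + Yc)
    (hYinvnn : Ys ≠ 0 → ∀ i j, 0 ≤ Y⁻¹ i j)
    (τ Rv Imax β α : Fin n → ℝ)
    (hτ : ∀ i, 0 < τ i) (hRv : ∀ i, 0 < Rv i) (hImax : ∀ i, 0 < Imax i)
    (hβ : ∀ i, 0 < β i) (hα : ∀ i, 0 ≤ α i)
    (D R Υ Ψ Φ : Matrix (Fin n) (Fin n) ℝ)
    (hD : D = Matrix.diagonal τ) (hR : R = Matrix.diagonal Rv)
    (hΥ : Υ = Matrix.diagonal Imax) (hΨ : Ψ = Matrix.diagonal β)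
    (hΦ : Φ = Matrix.diagonal α)
    (ubar rbar : ℝ) (hubar : 0 < ubar) (hrbar : 0 < rbar)
    (hRI : ∀ i, Rv i * Imax i = ubar) (hαβ : ∀ i, α i = rbar * β i)
    (ν₁ : ℝ) (hν₁ : 0 < ν₁)
    (hpsd : (Υ + ubar • Y
      - ν₁ • ((1 / 2 : ℝ) • (Y * Ψ * L + L * Ψ * Y))).PosSemidef)
    (θ : ℝ) (hθ : IsAdmissible θ (Y * Ψ * L))
    (hgain : (ν₁ + rbar) * θ ^ 2 + rbar >
      Finset.univ.sup' ⟨⟨0, by omega⟩, Finset.mem_univ _⟩ τ)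
    (A_c : Matrix (Fin n ⊕ Fin n) (Fin n ⊕ Fin n) ℝ)
    (hA : A_c = Matrix.fromBlocks
      (-(D⁻¹ * (1 + Y * R))) (D⁻¹ * Y)
      (-(Ψ * L * Υ⁻¹) + Φ * L * Υ⁻¹ * D⁻¹ * (1 + Y * R)) (-(Φ * L * Υ⁻¹ * D⁻¹ * Y))) :
    IsSemistable A_c := by
  subst hYs hY hD hR hΥ hΨ hΦ hA
  exact closedLoop_semistable_c1_general hYcsym hYcoff hYcrow hYcrank hLrow
    (sum_col_eq_zero_of_isSymm hLsym hLrow) hLrank hG hτ hImax hβ hubar.le hrbar.le hν₁.le hRI hαβ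
    (by rwa [hLsym.eq]) hθ fun i => (Finset.sup'_lt_iff _).1 hgain i (Finset.mem_univ i)
end

section
/- Let n ≥ 2, let Y = Y_c be a real symmetric n×n weighted graph Laplacian (nonpositive off-diagonal entries, zero row sums) of rank n−1, L a real symmetric n×n matrix with L·1ₙ = 0, and D, R, Υ, Φ, Ψ real diagonal matrices with strictly positive diagonals on D, R, Υ, Ψ and nonnegative diagonal on Φ. Suppose the closed-loop matrix A_c is semistable and rank(A_c) = 2n − 1. Then for every initial state (Iᵐ(0), Uᵈ(0)) ∈ ℝ^{2n}, lim_{t→∞} exp(t·A_c)·(Iᵐ(0), Uᵈ(0)) = (0, r_{c2}·1ₙ), where r_{c2} = [1ₙᵀΨ⁻¹(Uᵈ(0) + ΦLΥ⁻¹Iᵐ(0))] / [1ₙᵀΨ⁻¹1ₙ]. In particular all steady currents are zero and all nodes attain the same rated voltage r_{c2}. -/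
open Matrix Filter Topology

/-!
A semistable linear flow converges to a point of `ker A`, and every `w` with `wᵀA = 0` is a
conserved quantity `wᵀx`. If `ker A` is a line `ℝv`, the limit of the trajectory through `x` is
therefore `(wᵀx / wᵀv) v`; semistability itself forces `wᵀv ≠ 0`, since otherwise `wᵀx` would
vanish at every limit, whereas it keeps the value `wᵀw` along the trajectory of `w`. For the
microgrid, `v = (0, 1ₙ)` because `Y 1ₙ = 0`, and integrating the controller `U̇ = -ΨLΥ⁻¹I -
ΦLΥ⁻¹İ` against `1ₙᵀΨ⁻¹` kills the integral term because `1ₙᵀL = 0`, so that `1ₙᵀΨ⁻¹(U + ΦLΥ⁻¹I)`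
is conserved.
-/

section MatrixExponential

variable {N : Type*} [Fintype N] [DecidableEq N] {A : Matrix N N ℝ} {w x y : N → ℝ}

section

attribute [local instance] Matrix.linftyOpNormedRing Matrix.linftyOpNormedAlgebra

theorem hasDerivAt_exp_smul_mulVec (A : Matrix N N ℝ) (x : N → ℝ) (t : ℝ) :
    HasDerivAt (fun t : ℝ => NormedSpace.exp (t • A) *ᵥ x)
      (A *ᵥ (NormedSpace.exp (t • A) *ᵥ x)) t := by
  rw [mulVec_mulVec]
  exact ((mulVecBilin ℝ ℝ).flip x).toContinuousLinearMap.hasFDerivAt.comp_hasDerivAt t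
    (hasDerivAt_exp_smul_const' A t)

end

theorem dotProduct_exp_smul_mulVec (hw : w ᵥ* A = 0) (x : N → ℝ) (t : ℝ) :
    w ⬝ᵥ (NormedSpace.exp (t • A) *ᵥ x) = w ⬝ᵥ x := by
  have hderiv (s : ℝ) :
      HasDerivAt (fun s : ℝ => w ⬝ᵥ (NormedSpace.exp (s • A) *ᵥ x)) 0 s := by
    have h := (dotProductBilin ℝ ℝ w).toContinuousLinearMap.hasFDerivAt.comp_hasDerivAt s
      (hasDerivAt_exp_smul_mulVec A x s)
    have hzero : w ⬝ᵥ (A *ᵥ (NormedSpace.exp (s • A) *ᵥ x)) = 0 := by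
      rw [dotProduct_mulVec, hw, zero_dotProduct]
    exact hzero ▸ h
  simpa using is_const_of_deriv_eq_zero (fun s => (hderiv s).differentiableAt)
    (fun s => (hderiv s).deriv) t 0

theorem dotProduct_eq_of_tendsto_exp_smul_mulVec (hw : w ᵥ* A = 0)
    (h : Tendsto (fun t : ℝ => NormedSpace.exp (t • A) *ᵥ x) atTop (𝓝 y)) :
    w ⬝ᵥ y = w ⬝ᵥ x := by
  have hlim : Tendsto (fun t : ℝ => w ⬝ᵥ (NormedSpace.exp (t • A) *ᵥ x)) atTop (𝓝 (w ⬝ᵥ y)) :=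
    ((continuous_const.dotProduct continuous_id).tendsto y).comp h
  simp only [dotProduct_exp_smul_mulVec hw] at hlim
  exact tendsto_nhds_unique hlim tendsto_const_nhds

theorem exp_smul_mulVec_eq_of_tendsto_exp_smul_mulVec
    (h : Tendsto (fun t : ℝ => NormedSpace.exp (t • A) *ᵥ x) atTop (𝓝 y)) (s : ℝ) :
    NormedSpace.exp (s • A) *ᵥ y = y := by
  have hflow (t : ℝ) : NormedSpace.exp ((s + t) • A) *ᵥ x =
      NormedSpace.exp (s • A) *ᵥ (NormedSpace.exp (t • A) *ᵥ x) := by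
    have hcomm : Commute (s • A) (t • A) := ((Commute.refl A).smul_left s).smul_right t
    rw [add_smul, Matrix.exp_add_of_commute _ _ hcomm, mulVec_mulVec]
  have hshift : Tendsto (fun t : ℝ => NormedSpace.exp ((s + t) • A) *ᵥ x) atTop (𝓝 y) :=
    h.comp (tendsto_atTop_add_const_left atTop s tendsto_id)
  have himage : Tendsto (fun t : ℝ => NormedSpace.exp ((s + t) • A) *ᵥ x) atTop
      (𝓝 (NormedSpace.exp (s • A) *ᵥ y)) := by
    simp only [hflow]
    exact ((continuous_const.matrix_mulVec continuous_id).tendsto y).comp h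
  exact tendsto_nhds_unique himage hshift

theorem mulVec_eq_zero_of_tendsto_exp_smul_mulVec
    (h : Tendsto (fun t : ℝ => NormedSpace.exp (t • A) *ᵥ x) atTop (𝓝 y)) :
    A *ᵥ y = 0 := by
  have hderiv := hasDerivAt_exp_smul_mulVec A y 0
  simp only [exp_smul_mulVec_eq_of_tendsto_exp_smul_mulVec h] at hderiv
  exact hderiv.unique (hasDerivAt_const 0 y)

end MatrixExponential

theorem exists_smul_eq_of_rank_add_one_eq_card {m n 𝕜 : Type*} [Fintype n] [Field 𝕜]
    {A : Matrix m n 𝕜} (hA : A.rank + 1 = Fintype.card n) {v x : n → 𝕜} (hv : v ≠ 0)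
    (hAv : A *ᵥ v = 0) (hAx : A *ᵥ x = 0) : ∃ c : 𝕜, c • v = x := by
  have hker : Module.finrank 𝕜 (LinearMap.ker A.mulVecLin) = 1 := by
    have hdim := LinearMap.finrank_range_add_finrank_ker A.mulVecLin
    rw [Module.finrank_fintype_fun_eq_card, ← hA] at hdim
    exact Nat.add_left_cancel hdim
  obtain ⟨c, hc⟩ := (finrank_eq_one_iff_of_nonzero'
    (⟨v, hAv⟩ : LinearMap.ker A.mulVecLin) (Subtype.coe_ne_coe.1 hv)).1 hker ⟨x, hAx⟩
  exact ⟨c, congrArg Subtype.val hc⟩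

namespace IsSemistable

variable {N : Type*} [Fintype N] [DecidableEq N] {A : Matrix N N ℝ} {v w : N → ℝ}

theorem exists_tendsto_smul (hA : IsSemistable A) (hrank : A.rank + 1 = Fintype.card N)
    (hv : v ≠ 0) (hAv : A *ᵥ v = 0) (x : N → ℝ) :
    ∃ c : ℝ, Tendsto (fun t : ℝ => NormedSpace.exp (t • A) *ᵥ x) atTop (𝓝 (c • v)) := by
  obtain ⟨y, hy⟩ := hA x
  obtain ⟨c, rfl⟩ := exists_smul_eq_of_rank_add_one_eq_card hrank hv hAv
    (mulVec_eq_zero_of_tendsto_exp_smul_mulVec hy)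
  exact ⟨c, hy⟩

theorem dotProduct_ne_zero (hA : IsSemistable A) (hrank : A.rank + 1 = Fintype.card N)
    (hv : v ≠ 0) (hAv : A *ᵥ v = 0) (hw : w ≠ 0) (hwA : w ᵥ* A = 0) : w ⬝ᵥ v ≠ 0 := by
  obtain ⟨c, hc⟩ := hA.exists_tendsto_smul hrank hv hAv w
  have hconserved : c * w ⬝ᵥ v = w ⬝ᵥ w := by
    simpa only [dotProduct_smul, smul_eq_mul] using dotProduct_eq_of_tendsto_exp_smul_mulVec hwA hc
  exact right_ne_zero_of_mul (hconserved ▸ dotProduct_self_eq_zero.not.2 hw)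

theorem tendsto_exp_smul_mulVec (hA : IsSemistable A) (hrank : A.rank + 1 = Fintype.card N)
    (hv : v ≠ 0) (hAv : A *ᵥ v = 0) (hw : w ≠ 0) (hwA : w ᵥ* A = 0) (x : N → ℝ) :
    Tendsto (fun t : ℝ => NormedSpace.exp (t • A) *ᵥ x) atTop
      (𝓝 ((w ⬝ᵥ x / w ⬝ᵥ v) • v)) := by
  obtain ⟨c, hc⟩ := hA.exists_tendsto_smul hrank hv hAv x
  have hconserved : c * w ⬝ᵥ v = w ⬝ᵥ x := by
    simpa only [dotProduct_smul, smul_eq_mul] using dotProduct_eq_of_tendsto_exp_smul_mulVec hwA hc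
  rwa [← eq_div_of_mul_eq (hA.dotProduct_ne_zero hrank hv hAv hw hwA) hconserved]

end IsSemistable

/-- The system matrix, in the state `(x, u)`, of the plant `ẋ = F x + B u` under the
proportional-integral feedback `u̇ = -G x - P ẋ`. The microgrid matrix `A_c` is the case
`F = -D⁻¹(E + YR)`, `B = D⁻¹Y`, `G = ΨLΥ⁻¹`, `P = ΦLΥ⁻¹`. -/
def piClosedLoop {σ κ 𝕜 : Type*} [Fintype σ] [Ring 𝕜] (F : Matrix σ σ 𝕜) (B : Matrix σ κ 𝕜)
    (G P : Matrix κ σ 𝕜) : Matrix (σ ⊕ κ) (σ ⊕ κ) 𝕜 :=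
  fromBlocks F B (-G - P * F) (-(P * B))

namespace piClosedLoop

variable {σ κ : Type*} [Fintype σ] [Fintype κ]

section

variable {𝕜 : Type*} [Ring 𝕜] {F : Matrix σ σ 𝕜} {B : Matrix σ κ 𝕜} {G P : Matrix κ σ 𝕜}
  {p q : κ → 𝕜}

theorem mulVec_sumElim_zero (hp : B *ᵥ p = 0) :
    piClosedLoop F B G P *ᵥ Sum.elim 0 p = 0 := by
  simp [piClosedLoop, fromBlocks_mulVec, neg_mulVec, ← mulVec_mulVec, hp]

theorem sumElim_vecMul (hq : q ᵥ* G = 0) :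
    Sum.elim (q ᵥ* P) q ᵥ* piClosedLoop F B G P = 0 := by
  simp [piClosedLoop, vecMul_fromBlocks, vecMul_neg, vecMul_sub, ← vecMul_vecMul, hq]

end

variable [DecidableEq σ] [DecidableEq κ] {F : Matrix σ σ ℝ} {B : Matrix σ κ ℝ}
  {G P : Matrix κ σ ℝ} {p q : κ → ℝ}

theorem dotProduct_ne_zero_and_tendsto_exp_smul_mulVec
    (hA : IsSemistable (piClosedLoop F B G P))
    (hrank : (piClosedLoop F B G P).rank + 1 = Fintype.card (σ ⊕ κ))
    (hp₀ : p ≠ 0) (hp : B *ᵥ p = 0) (hq₀ : q ≠ 0) (hq : q ᵥ* G = 0) :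
    q ⬝ᵥ p ≠ 0 ∧ ∀ z : σ ⊕ κ → ℝ,
      Tendsto (fun t : ℝ => NormedSpace.exp (t • piClosedLoop F B G P) *ᵥ z) atTop
        (𝓝 (Sum.elim 0
          ((q ⬝ᵥ (z ∘ Sum.inr + P *ᵥ (z ∘ Sum.inl)) / q ⬝ᵥ p) • p))) := by
  have hv₀ : Sum.elim (0 : σ → ℝ) p ≠ 0 := fun h => hp₀ (congrArg (· ∘ Sum.inr) h)
  have hw₀ : Sum.elim (q ᵥ* P) q ≠ 0 := fun h => hq₀ (congrArg (· ∘ Sum.inr) h)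
  have hv := mulVec_sumElim_zero (F := F) (G := G) (P := P) hp
  have hw := sumElim_vecMul (F := F) (B := B) (P := P) hq
  have hwv : Sum.elim (q ᵥ* P) q ⬝ᵥ Sum.elim 0 p = q ⬝ᵥ p := by
    rw [sumElim_dotProduct_sumElim, dotProduct_zero, zero_add]
  refine ⟨hwv ▸ hA.dotProduct_ne_zero hrank hv₀ hv hw₀ hw, fun z => ?_⟩
  have hwz : Sum.elim (q ᵥ* P) q ⬝ᵥ z = q ⬝ᵥ (z ∘ Sum.inr + P *ᵥ (z ∘ Sum.inl)) := by
    conv_lhs => rw [← Sum.elim_comp_inl_inr z]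
    rw [sumElim_dotProduct_sumElim, dotProduct_add, dotProduct_mulVec, add_comm]
  have hsmul (c : ℝ) : c • Sum.elim (0 : σ → ℝ) p = Sum.elim (0 : σ → ℝ) (c • p) := by
    ext (_ | _) <;> simp
  have hlim := hA.tendsto_exp_smul_mulVec hrank hv₀ hv hw₀ hw z
  rwa [hwz, hwv, hsmul] at hlim

end piClosedLoop

-- `T` and `S` stand for `D⁻¹` and `Υ⁻¹`.
theorem closedLoop_steady_state_no_shunt_general {ι : Type*} [Fintype ι] [DecidableEq ι]
    [Nonempty ι] {T R Y L S Φ Ψ : Matrix ι ι ℝ} (hY : Y *ᵥ 1 = 0) (hL : 1 ᵥ* L = 0)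
    (hΨ : IsUnit Ψ) {A : Matrix (ι ⊕ ι) (ι ⊕ ι) ℝ}
    (hA : A = fromBlocks (-(T * (1 + Y * R))) (T * Y)
      (-(Ψ * L * S) + Φ * L * S * T * (1 + Y * R)) (-(Φ * L * S * T * Y)))
    (hsemi : IsSemistable A) (hrank : A.rank + 1 = Fintype.card (ι ⊕ ι)) :
    1 ⬝ᵥ (Ψ⁻¹ *ᵥ 1) ≠ 0 ∧ ∀ z : ι ⊕ ι → ℝ,
      Tendsto (fun t : ℝ => NormedSpace.exp (t • A) *ᵥ z) atTop
        (𝓝 (Sum.elim 0 (fun _ =>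
          1 ⬝ᵥ (Ψ⁻¹ *ᵥ (z ∘ Sum.inr + (Φ * L * S) *ᵥ (z ∘ Sum.inl))) /
            1 ⬝ᵥ (Ψ⁻¹ *ᵥ 1)))) := by
  have hpi : A = piClosedLoop (-(T * (1 + Y * R))) (T * Y) (Ψ * L * S) (Φ * L * S) := by
    simp only [hA, piClosedLoop, Matrix.mul_neg, sub_neg_eq_add, Matrix.mul_assoc]
  have hTY : (T * Y) *ᵥ 1 = 0 := by rw [← mulVec_mulVec, hY, mulVec_zero]
  have hq₀ : 1 ᵥ* Ψ⁻¹ ≠ 0 := fun h =>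
    one_ne_zero (vecMul_injective_of_isUnit (isUnit_nonsing_inv_iff.2 hΨ)
      (h.trans (zero_vecMul _).symm))
  have hq : (1 ᵥ* Ψ⁻¹) ᵥ* (Ψ * L * S) = 0 := by
    rw [Matrix.mul_assoc, vecMul_vecMul,
      nonsing_inv_mul_cancel_left _ _ ((isUnit_iff_isUnit_det Ψ).1 hΨ), ← vecMul_vecMul, hL,
      zero_vecMul]
  subst hpi
  have hlim := piClosedLoop.dotProduct_ne_zero_and_tendsto_exp_smul_mulVec hsemi hrank
    one_ne_zero hTY hq₀ hq
  simpa only [← dotProduct_mulVec, Pi.smul_def, Pi.one_apply, smul_eq_mul, mul_one] using hlim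

/-- With no shunt conductances (`Y = Y_c` a connected Laplacian), the
semistable closed-loop matrix `A_c` with `rank(A_c) = 2n − 1` drives every trajectory to
`(0, r_{c2}·1ₙ)`, where `r_{c2} = 1ₙᵀΨ⁻¹(Uᵈ(0) + ΦLΥ⁻¹Iᵐ(0)) / 1ₙᵀΨ⁻¹1ₙ`: all steady
currents vanish and all nodes attain the same rated voltage `r_{c2}`. -/
theorem closedLoop_steady_state_no_shunt
    (n : ℕ) (hn : 2 ≤ n)
    (Yc : Matrix (Fin n) (Fin n) ℝ)
    (hYcsym : Yc.IsSymm)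
    (hYcoff : ∀ i j, i ≠ j → Yc i j ≤ 0)
    (hYcrow : ∀ i, ∑ j, Yc i j = 0)
    (hYcrank : Yc.rank = n - 1)
    (Y : Matrix (Fin n) (Fin n) ℝ) (hY : Y = Yc)
    (L : Matrix (Fin n) (Fin n) ℝ) (hLsym : L.IsSymm)
    (hL1 : L *ᵥ (fun _ => (1 : ℝ)) = 0)
    (d r υ φv ψv : Fin n → ℝ)
    (hd : ∀ i, 0 < d i) (hr : ∀ i, 0 < r i) (hυ : ∀ i, 0 < υ i) (hψ : ∀ i, 0 < ψv i)
    (hφ : ∀ i, 0 ≤ φv i)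
    (D R Υ Φ Ψ : Matrix (Fin n) (Fin n) ℝ)
    (hD : D = Matrix.diagonal d) (hR : R = Matrix.diagonal r)
    (hΥ : Υ = Matrix.diagonal υ) (hΦ : Φ = Matrix.diagonal φv)
    (hΨ : Ψ = Matrix.diagonal ψv)
    (A_c : Matrix (Fin n ⊕ Fin n) (Fin n ⊕ Fin n) ℝ)
    (hA : A_c = Matrix.fromBlocks
      (-(D⁻¹ * (1 + Y * R))) (D⁻¹ * Y)
      (-(Ψ * L * Υ⁻¹) + Φ * L * Υ⁻¹ * D⁻¹ * (1 + Y * R)) (-(Φ * L * Υ⁻¹ * D⁻¹ * Y)))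
    (hsemi : IsSemistable A_c)
    (hrank : A_c.rank = 2 * n - 1) :
    ∀ z₀ : Fin n ⊕ Fin n → ℝ,
      Tendsto (fun t : ℝ => NormedSpace.exp (t • A_c) *ᵥ z₀) atTop
        (𝓝 (Sum.elim (0 : Fin n → ℝ)
          (fun _ => ((fun _ => (1 : ℝ)) ⬝ᵥ
              (Ψ⁻¹ *ᵥ ((fun i => z₀ (Sum.inr i)) +
                (Φ * L * Υ⁻¹) *ᵥ (fun i => z₀ (Sum.inl i))))) /
            ((fun _ => (1 : ℝ)) ⬝ᵥ (Ψ⁻¹ *ᵥ (fun _ => (1 : ℝ))))))) := by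
  subst hY hΨ
  have : Nonempty (Fin n) := ⟨⟨0, by omega⟩⟩
  have hY1 : Y *ᵥ 1 = 0 := funext fun i => by simpa [mulVec, dotProduct] using hYcrow i
  have h1L : 1 ᵥ* L = 0 := by
    rw [← mulVec_transpose, hLsym.eq]
    exact hL1
  have hΨ : IsUnit (diagonal ψv) :=
    isUnit_diagonal.2 (Pi.isUnit_iff.2 fun i => (hψ i).ne'.isUnit)
  have hcard : A_c.rank + 1 = Fintype.card (Fin n ⊕ Fin n) := by
    rw [hrank, Fintype.card_sum, Fintype.card_fin]
    omega
  exact (closedLoop_steady_state_no_shunt_general hY1 h1L hΨ hA hsemi hcard).2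
end

section
/- Let A be a real n×n matrix. Then A is semistable — i.e., for every x₀ ∈ ℝⁿ the limit as t → ∞ of exp(tA)·x₀ exists — if and only if A is Lyapunov stable (for every x₀ there exists ε > 0 such that ‖exp(tA)·x₀‖ < ε for all t ≥ 0) and A has no nonzero purely imaginary eigenvalue (every eigenvalue λ ∈ ℂ of A with Re λ = 0 satisfies λ = 0). -/
open Matrix Filter Topology

/-- A real square matrix `A` is Lyapunov stable if every trajectory `exp(tA)x₀` is
bounded on `[0, ∞)`. -/
def IsLyapunovStable {N : Type*} [Fintype N] [DecidableEq N]
    (A : Matrix N N ℝ) : Prop :=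
  ∀ x₀ : N → ℝ, ∃ ε : ℝ, 0 < ε ∧
    ∀ t : ℝ, 0 ≤ t → ‖NormedSpace.exp (t • A) *ᵥ x₀‖ < ε

/-!
Complexify `A` and let `T` be the resulting operator; convergence and boundedness of orbits pass to
and from `T` through real and imaginary parts. Every vector is a sum of generalized eigenvectors of
`T`, on which `exp (tT)` acts as `exp (tμ)` times a polynomial in `t`. If `μ.re < 0` the orbit tends
to `0`. If `0 ≤ μ.re`, boundedness forces the polynomial to be constant, so the vector is an
eigenvector, and also forces `μ.re = 0`; hence `μ = 0` and the orbit is constant. Conversely, a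
nonzero limit of `exp (tμ) v` is fixed by multiplication by every `exp (sμ)`, so `μ = 0`.
-/

lemma mem_maxGenEigenspace_iff_exists_pow_sub_apply_eq_zero {R M : Type*} [CommRing R]
    [AddCommGroup M] [TopologicalSpace M] [IsTopologicalAddGroup M] [Module R M]
    [ContinuousConstSMul R M] {T : M →L[R] M} {μ : R} {v : M} :
    v ∈ Module.End.maxGenEigenspace (T : Module.End R M) μ ↔
      ∃ k : ℕ, ((T - μ • (1 : M →L[R] M)) ^ k) v = 0 := by
  have hpow (k : ℕ) : (((T : Module.End R M) - μ • 1) ^ k) v =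
      ((T - μ • (1 : M →L[R] M)) ^ k) v := by
    rw [← ContinuousLinearMap.coe_coe, ContinuousLinearMap.toLinearMap_pow]
    rfl
  simp only [Module.End.mem_maxGenEigenspace, hpow]

section NilpotentVector

variable {𝕜 E : Type*} [NontriviallyNormedField 𝕜] [CharZero 𝕜] [ContinuousSMul ℚ 𝕜]
  [NormedAddCommGroup E] [NormedSpace 𝕜 E] [CompleteSpace E]

open scoped Nat in
lemma exp_apply_eq_sum_range_of_pow_apply_eq_zero {T : E →L[𝕜] E} {v : E} {k : ℕ}
    (hv : (T ^ k) v = 0) :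
    NormedSpace.exp T v = ∑ j ∈ Finset.range k, (j ! : 𝕜)⁻¹ • (T ^ j) v := by
  have hasSum_exp : HasSum (fun j : ℕ ↦ (j ! : 𝕜)⁻¹ • (T ^ j) v) (NormedSpace.exp T v) :=
    (NormedSpace.exp_series_hasSum_exp' (𝕂 := 𝕜) T).mapL (ContinuousLinearMap.apply 𝕜 E v)
  refine hasSum_exp.unique (hasSum_sum_of_ne_finset_zero fun j hj ↦ ?_)
  obtain ⟨m, rfl⟩ := Nat.exists_eq_add_of_le' (Finset.mem_range.not.1 hj |> not_lt.1)
  rw [pow_add, mul_apply_eq_comp, hv, map_zero, smul_zero]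

end NilpotentVector

section ScalarLimits

lemma tendsto_pow_mul_cexp_atTop_nhds_zero {μ : ℂ} (hμ : μ.re < 0) (j : ℕ) :
    Tendsto (fun t : ℝ ↦ (t : ℂ) ^ j * Complex.exp (t * μ)) atTop (𝓝 0) := by
  rw [tendsto_zero_iff_norm_tendsto_zero]
  refine (tendsto_rpow_mul_exp_neg_mul_atTop_nhds_zero j (-μ.re) (neg_pos.2 hμ)).congr' ?_
  filter_upwards [eventually_ge_atTop 0] with t ht
  rw [norm_mul, Complex.norm_exp, norm_pow, Complex.norm_of_nonneg ht, Real.rpow_natCast,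
    Complex.re_ofReal_mul, neg_neg, mul_comm μ.re]

lemma eq_zero_of_forall_cexp_mul_eq_one {μ : ℂ} (h : ∀ s : ℝ, Complex.exp (s * μ) = 1) :
    μ = 0 := by
  have hderiv : HasDerivAt (fun s : ℝ ↦ Complex.exp (s * μ)) μ 0 := by
    simpa using ((Complex.ofRealCLM.hasDerivAt (x := 0)).mul_const μ).cexp
  simp only [h] at hderiv
  exact hderiv.unique (hasDerivAt_const 0 1)

variable {E : Type*} [NormedAddCommGroup E]

lemma eq_zero_of_forall_norm_add_smul_le [NormedSpace ℝ E] {w u : E} {C : ℝ}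
    (h : ∀ t : ℝ, 0 ≤ t → ‖w + t • u‖ ≤ C) : u = 0 := by
  by_contra hu
  have hlarge : Tendsto (fun t : ℝ ↦ t * ‖u‖) atTop atTop :=
    tendsto_id.atTop_mul_const (norm_pos_iff.2 hu)
  obtain ⟨t, ht, htC⟩ := ((eventually_ge_atTop 0).and (hlarge.eventually_gt_atTop (C + ‖w‖))).exists
  have hle : t * ‖u‖ ≤ C + ‖w‖ := calc
    t * ‖u‖ = ‖(w + t • u) - w‖ := by rw [add_sub_cancel_left, norm_smul, Real.norm_of_nonneg ht]
    _ ≤ ‖w + t • u‖ + ‖w‖ := norm_sub_le _ _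
    _ ≤ C + ‖w‖ := by gcongr; exact h t ht
  exact hle.not_gt htC

lemma eq_zero_of_tendsto_cexp_smul [NormedSpace ℂ E] {μ : ℂ} {v y : E} (hy : y ≠ 0)
    (h : Tendsto (fun t : ℝ ↦ Complex.exp (t * μ) • v) atTop (𝓝 y)) : μ = 0 := by
  refine eq_zero_of_forall_cexp_mul_eq_one fun s ↦ ?_
  have hshift : Tendsto (fun t : ℝ ↦ Complex.exp (s * μ) • Complex.exp (t * μ) • v) atTop
      (𝓝 y) := by
    refine (h.comp (tendsto_atTop_add_const_left atTop s tendsto_id)).congr fun t ↦ ?_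
    simp only [Function.comp_apply, id_eq, Complex.ofReal_add, add_mul, Complex.exp_add, mul_smul]
  have hfixed : Complex.exp (s * μ) • y = y := tendsto_nhds_unique (h.const_smul _) hshift
  exact smul_left_injective ℂ hy (hfixed.trans (one_smul ℂ y).symm)

lemma exists_forall_norm_le_of_tendsto_atTop {f : ℝ → E} {y : E} (hf : Continuous f)
    (hy : Tendsto f atTop (𝓝 y)) (a : ℝ) : ∃ C, ∀ t, a ≤ t → ‖f t‖ ≤ C := by
  obtain ⟨T, hT⟩ := eventually_atTop.1 (hy.norm.eventually_le_const (lt_add_one ‖y‖))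
  obtain ⟨C, hC⟩ := isCompact_Icc.exists_bound_of_continuousOn (hf.continuousOn (s := Set.Icc a T))
  refine ⟨max C (‖y‖ + 1), fun t ht ↦ ?_⟩
  rcases le_total t T with htT | hTt
  · exact le_max_of_le_left (hC t ⟨ht, htT⟩)
  · exact le_max_of_le_right (hT t hTt)

end ScalarLimits

section Orbits

variable {E : Type*} [NormedAddCommGroup E] [NormedSpace ℂ E] {T : E →L[ℂ] E} {μ : ℂ} {v : E}

/-- Semistability of a bounded operator on a complex normed space: every trajectory of `ẋ = Tx`
converges. The real time is cast to `ℂ` so that it acts by the scalars of the space. -/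
def HasConvergentOrbits (T : E →L[ℂ] E) : Prop :=
  ∀ x : E, ∃ y : E, Tendsto (fun t : ℝ ↦ NormedSpace.exp ((t : ℂ) • T) x) atTop (𝓝 y)

/-- Lyapunov stability of a bounded operator on a complex normed space: every trajectory of
`ẋ = Tx` is bounded on `[0, ∞)`. -/
def HasBoundedOrbits (T : E →L[ℂ] E) : Prop :=
  ∀ x : E, ∃ C : ℝ, ∀ t : ℝ, 0 ≤ t → ‖NormedSpace.exp ((t : ℂ) • T) x‖ ≤ C

variable [CompleteSpace E]

lemma continuous_exp_ofReal_smul_apply (T : E →L[ℂ] E) (v : E) :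
    Continuous fun t : ℝ ↦ NormedSpace.exp ((t : ℂ) • T) v := by
  let _ : NormedAlgebra ℚ (E →L[ℂ] E) := NormedAlgebra.restrictScalars ℚ ℂ _
  exact (NormedSpace.exp_continuous.comp
    (Complex.continuous_ofReal.smul continuous_const)).clm_apply continuous_const

lemma exp_smul_apply_eq_cexp_smul (T : E →L[ℂ] E) (μ t : ℂ) (v : E) :
    NormedSpace.exp (t • T) v =
      Complex.exp (t * μ) • NormedSpace.exp (t • (T - μ • (1 : E →L[ℂ] E))) v := by
  let _ : NormedAlgebra ℚ (E →L[ℂ] E) := NormedAlgebra.restrictScalars ℚ ℂ _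
  have hsplit : t • T = algebraMap ℂ (E →L[ℂ] E) (t * μ) + t • (T - μ • 1) := by
    rw [Algebra.algebraMap_eq_smul_one, smul_sub, smul_smul, add_sub_cancel]
  rw [hsplit, NormedSpace.exp_add_of_commute (Algebra.commutes _ _),
    ← NormedSpace.algebraMap_exp_comm, ← Complex.exp_eq_exp_ℂ, Algebra.algebraMap_eq_smul_one,
    smul_one_mul, _root_.smul_apply]

open scoped Nat in
lemma exp_smul_apply_of_pow_sub_apply_eq_zero {k : ℕ}
    (hv : ((T - μ • (1 : E →L[ℂ] E)) ^ k) v = 0) (t : ℂ) :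
    NormedSpace.exp (t • T) v = Complex.exp (t * μ) •
      ∑ j ∈ Finset.range k, ((j ! : ℂ)⁻¹ * t ^ j) • ((T - μ • (1 : E →L[ℂ] E)) ^ j) v := by
  have hpow (j : ℕ) : ((t • (T - μ • (1 : E →L[ℂ] E))) ^ j) v =
      t ^ j • ((T - μ • (1 : E →L[ℂ] E)) ^ j) v := by
    rw [smul_pow, _root_.smul_apply]
  rw [exp_smul_apply_eq_cexp_smul T μ, exp_apply_eq_sum_range_of_pow_apply_eq_zero (𝕜 := ℂ)
    (by rw [hpow, hv, smul_zero])]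
  simp only [hpow, smul_smul]

lemma exp_smul_apply_of_apply_eq_smul (hv : T v = μ • v) (t : ℂ) :
    NormedSpace.exp (t • T) v = Complex.exp (t * μ) • v := by
  have hker : ((T - μ • (1 : E →L[ℂ] E)) ^ 1) v = 0 := by simp [hv]
  simpa using exp_smul_apply_of_pow_sub_apply_eq_zero hker t

lemma tendsto_exp_smul_apply_nhds_zero_of_re_neg (hμ : μ.re < 0)
    (hv : v ∈ Module.End.maxGenEigenspace (T : Module.End ℂ E) μ) :
    Tendsto (fun t : ℝ ↦ NormedSpace.exp ((t : ℂ) • T) v) atTop (𝓝 0) := by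
  obtain ⟨k, hk⟩ := mem_maxGenEigenspace_iff_exists_pow_sub_apply_eq_zero.1 hv
  simp only [exp_smul_apply_of_pow_sub_apply_eq_zero hk, Finset.smul_sum, smul_smul]
  rw [← Finset.sum_const_zero (s := Finset.range k)]
  refine tendsto_finsetSum _ fun j _ ↦ ?_
  have hcoeff := (tendsto_pow_mul_cexp_atTop_nhds_zero hμ j).const_mul (j.factorial : ℂ)⁻¹
  rw [mul_zero] at hcoeff
  rw [← zero_smul ℂ (((T - μ • (1 : E →L[ℂ] E)) ^ j) v)]
  exact (hcoeff.congr fun t ↦ by ring).smul_const _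

lemma HasBoundedOrbits.sub_apply_eq_zero_of_sq_sub_apply_eq_zero (hT : HasBoundedOrbits T)
    (hμ : 0 ≤ μ.re) (hv : ((T - μ • (1 : E →L[ℂ] E)) ^ 2) v = 0) :
    (T - μ • (1 : E →L[ℂ] E)) v = 0 := by
  obtain ⟨C, hC⟩ := hT v
  refine eq_zero_of_forall_norm_add_smul_le (w := v) (C := C) fun t ht ↦ ?_
  have horbit : NormedSpace.exp ((t : ℂ) • T) v =
      Complex.exp (t * μ) • (v + t • (T - μ • (1 : E →L[ℂ] E)) v) := by
    rw [exp_smul_apply_of_pow_sub_apply_eq_zero hv, ← Complex.coe_smul t]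
    simp [Finset.sum_range_succ]
  have hgrow : 1 ≤ ‖Complex.exp (t * μ)‖ := by
    rw [Complex.norm_exp, Complex.re_ofReal_mul]
    exact Real.one_le_exp (mul_nonneg ht hμ)
  calc ‖v + t • (T - μ • (1 : E →L[ℂ] E)) v‖
      ≤ ‖Complex.exp (t * μ)‖ * ‖v + t • (T - μ • (1 : E →L[ℂ] E)) v‖ :=
        le_mul_of_one_le_left (norm_nonneg _) hgrow
    _ = ‖NormedSpace.exp ((t : ℂ) • T) v‖ := by rw [horbit, norm_smul]
    _ ≤ C := hC t ht

lemma HasBoundedOrbits.maxGenEigenspace_eq_eigenspace (hT : HasBoundedOrbits T)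
    (hμ : 0 ≤ μ.re) :
    Module.End.maxGenEigenspace (T : Module.End ℂ E) μ =
      Module.End.eigenspace (T : Module.End ℂ E) μ := by
  refine le_antisymm (fun v hv ↦ ?_) Module.End.eigenspace_le_maxGenEigenspace
  obtain ⟨k, hk⟩ := mem_maxGenEigenspace_iff_exists_pow_sub_apply_eq_zero.1 hv
  suffices hker : (T - μ • (1 : E →L[ℂ] E)) v = 0 from
    Module.End.mem_eigenspace_iff.2 (sub_eq_zero.1 hker)
  induction k with
  | zero => rw [show v = 0 from hk, map_zero]
  | succ k ih =>
    rcases k with _ | m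
    · rwa [zero_add, pow_one] at hk
    · refine ih ?_
      rw [pow_succ', mul_apply_eq_comp]
      refine hT.sub_apply_eq_zero_of_sq_sub_apply_eq_zero hμ ?_
      rwa [← mul_apply_eq_comp, ← pow_add, add_comm]

lemma HasBoundedOrbits.re_nonpos_of_apply_eq_smul (hT : HasBoundedOrbits T) (hv₀ : v ≠ 0)
    (hv : T v = μ • v) : μ.re ≤ 0 := by
  by_contra! hμ
  obtain ⟨C, hC⟩ := hT v
  have hlarge : Tendsto (fun t : ℝ ↦ Real.exp (t * μ.re) * ‖v‖) atTop atTop :=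
    (Real.tendsto_exp_atTop.comp (tendsto_id.atTop_mul_const hμ)).atTop_mul_const
      (norm_pos_iff.2 hv₀)
  obtain ⟨t, ht, htC⟩ := ((eventually_ge_atTop 0).and (hlarge.eventually_gt_atTop C)).exists
  refine (hC t ht).not_gt ?_
  rwa [exp_smul_apply_of_apply_eq_smul hv, norm_smul, Complex.norm_exp, Complex.re_ofReal_mul]

lemma HasConvergentOrbits.hasBoundedOrbits (hT : HasConvergentOrbits T) : HasBoundedOrbits T := by
  intro x
  obtain ⟨y, hy⟩ := hT x
  exact exists_forall_norm_le_of_tendsto_atTop (continuous_exp_ofReal_smul_apply T x) hy 0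

lemma HasConvergentOrbits.eq_zero_of_hasEigenvalue (hT : HasConvergentOrbits T)
    (hμ : Module.End.HasEigenvalue (T : Module.End ℂ E) μ) (hre : μ.re = 0) : μ = 0 := by
  obtain ⟨v, hv⟩ := hμ.exists_hasEigenvector
  obtain ⟨y, hy⟩ := hT v
  simp only [exp_smul_apply_of_apply_eq_smul hv.apply_eq_smul] at hy
  have hnorm : ‖v‖ = ‖y‖ := by
    refine tendsto_nhds_unique (tendsto_const_nhds.congr fun t : ℝ ↦ ?_) hy.norm
    rw [norm_smul, Complex.norm_exp, Complex.re_ofReal_mul, hre, mul_zero, Real.exp_zero, one_mul]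
  have hy₀ : y ≠ 0 := norm_ne_zero_iff.1 (hnorm ▸ norm_ne_zero_iff.2 hv.2)
  exact eq_zero_of_tendsto_cexp_smul hy₀ hy

lemma HasBoundedOrbits.exists_tendsto_of_mem_maxGenEigenspace (hT : HasBoundedOrbits T)
    (himag : Module.End.HasEigenvalue (T : Module.End ℂ E) μ → μ.re = 0 → μ = 0)
    (hv : v ∈ Module.End.maxGenEigenspace (T : Module.End ℂ E) μ) :
    ∃ y, Tendsto (fun t : ℝ ↦ NormedSpace.exp ((t : ℂ) • T) v) atTop (𝓝 y) := by
  rcases lt_or_ge μ.re 0 with hneg | hnonneg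
  · exact ⟨0, tendsto_exp_smul_apply_nhds_zero_of_re_neg hneg hv⟩
  rw [hT.maxGenEigenspace_eq_eigenspace hnonneg] at hv
  have hTv : T v = μ • v := Module.End.mem_eigenspace_iff.1 hv
  rcases eq_or_ne v 0 with rfl | hv₀
  · exact ⟨0, by simp only [map_zero, tendsto_const_nhds_iff]⟩
  have hre : μ.re = 0 := le_antisymm (hT.re_nonpos_of_apply_eq_smul hv₀ hTv) hnonneg
  have hμ : μ = 0 := himag (Module.End.hasEigenvalue_of_hasEigenvector ⟨hv, hv₀⟩) hre
  refine ⟨v, tendsto_const_nhds.congr fun t ↦ ?_⟩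
  rw [exp_smul_apply_of_apply_eq_smul hTv, hμ, mul_zero, Complex.exp_zero, one_smul]

end Orbits

theorem hasConvergentOrbits_iff_hasBoundedOrbits_and_no_imaginary_eigenvalue {E : Type*}
    [NormedAddCommGroup E] [NormedSpace ℂ E] [FiniteDimensional ℂ E] {T : E →L[ℂ] E} :
    HasConvergentOrbits T ↔ HasBoundedOrbits T ∧
      ∀ μ : ℂ, Module.End.HasEigenvalue (T : Module.End ℂ E) μ → μ.re = 0 → μ = 0 := by
  have := FiniteDimensional.complete ℂ E
  refine ⟨fun hT ↦ ⟨hT.hasBoundedOrbits, fun μ ↦ hT.eq_zero_of_hasEigenvalue⟩, ?_⟩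
  rintro ⟨hT, himag⟩ v
  have hv : v ∈ ⨆ μ : ℂ, Module.End.maxGenEigenspace (T : Module.End ℂ E) μ :=
    Module.End.iSup_maxGenEigenspace_eq_top (T : Module.End ℂ E) ▸ Submodule.mem_top
  induction hv using Submodule.iSup_induction' with
  | mem μ x hx => exact hT.exists_tendsto_of_mem_maxGenEigenspace (himag μ) hx
  | zero => exact ⟨0, by simp only [map_zero, tendsto_const_nhds_iff]⟩
  | add x y _ _ hx hy =>
    obtain ⟨a, ha⟩ := hx
    obtain ⟨b, hb⟩ := hy
    exact ⟨a + b, by simpa only [map_add] using ha.add hb⟩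

section Complexification

variable {N : Type*} [Fintype N]

lemma norm_ofReal_comp (x : N → ℝ) : ‖(Complex.ofReal ∘ x : N → ℂ)‖ = ‖x‖ := by
  simp [Pi.norm_def]

variable [DecidableEq N]

/-- The complexification of a real square matrix, as a bounded operator on `ℂᴺ`. It is bundled as
an algebra homomorphism so that it commutes with the exponential. -/
noncomputable def complexOperator : Matrix N N ℝ →ₐ[ℝ] ((N → ℂ) →L[ℂ] (N → ℂ)) :=
  ((Matrix.toLinAlgEquiv'.trans
    (Module.End.toContinuousLinearMap (N → ℂ))).toAlgHom.restrictScalars ℝ).comp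
      Complex.ofRealAm.mapMatrix

lemma complexOperator_apply (A : Matrix N N ℝ) (v : N → ℂ) :
    complexOperator A v = A.map Complex.ofReal *ᵥ v := rfl

lemma exp_smul_complexOperator_apply_ofReal (A : Matrix N N ℝ) (t : ℝ) (x : N → ℝ) :
    NormedSpace.exp ((t : ℂ) • complexOperator A) (Complex.ofReal ∘ x) =
      Complex.ofReal ∘ (NormedSpace.exp (t • A) *ᵥ x) := by
  let _ : NormedRing (Matrix N N ℝ) := Matrix.linftyOpNormedRing
  let _ : NormedAlgebra ℝ (Matrix N N ℝ) := Matrix.linftyOpNormedAlgebra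
  let _ : NormedAlgebra ℚ (Matrix N N ℝ) := NormedAlgebra.restrictScalars ℚ ℝ _
  let _ : NormedAlgebra ℚ ((N → ℂ) →L[ℂ] (N → ℂ)) := NormedAlgebra.restrictScalars ℚ ℂ _
  have hcont : Continuous (complexOperator (N := N)) :=
    complexOperator.toLinearMap.continuous_of_finiteDimensional
  have hsmul : (t : ℂ) • complexOperator A = complexOperator (t • A) :=
    (map_smul complexOperator t A).symm
  rw [hsmul, ← NormedSpace.map_exp complexOperator hcont,
    complexOperator_apply]
  exact funext fun i ↦ (Complex.ofRealHom.map_mulVec _ x i).symm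

lemma exp_smul_complexOperator_apply (A : Matrix N N ℝ) (t : ℝ) (z : N → ℂ) :
    NormedSpace.exp ((t : ℂ) • complexOperator A) z =
      Complex.ofReal ∘ (NormedSpace.exp (t • A) *ᵥ (Complex.re ∘ z)) +
        Complex.I • (Complex.ofReal ∘ (NormedSpace.exp (t • A) *ᵥ (Complex.im ∘ z))) := by
  have hz : z =
      Complex.ofReal ∘ Complex.re ∘ z + Complex.I • (Complex.ofReal ∘ Complex.im ∘ z) := by
    funext i
    simp [mul_comm Complex.I]
  conv_lhs => rw [hz]
  rw [map_add, map_smul, exp_smul_complexOperator_apply_ofReal,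
    exp_smul_complexOperator_apply_ofReal]

lemma isSemistable_iff_hasConvergentOrbits {A : Matrix N N ℝ} :
    IsSemistable A ↔ HasConvergentOrbits (complexOperator A) := by
  constructor
  · intro hA z
    obtain ⟨y, hy⟩ := hA (Complex.re ∘ z)
    obtain ⟨y', hy'⟩ := hA (Complex.im ∘ z)
    refine ⟨Complex.ofReal ∘ y + Complex.I • (Complex.ofReal ∘ y'), ?_⟩
    simp only [exp_smul_complexOperator_apply]
    have hofReal : Continuous fun x : N → ℝ ↦ Complex.ofReal ∘ x := by fun_prop
    exact ((hofReal.tendsto y).comp hy).add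
      (((hofReal.tendsto y').comp hy').const_smul Complex.I)
  · intro hT x
    obtain ⟨y, hy⟩ := hT (Complex.ofReal ∘ x)
    simp only [exp_smul_complexOperator_apply_ofReal] at hy
    refine ⟨Complex.re ∘ y, tendsto_pi_nhds.2 fun i ↦ ?_⟩
    exact (Complex.continuous_re.tendsto _).comp (tendsto_pi_nhds.1 hy i)

lemma isLyapunovStable_iff_hasBoundedOrbits {A : Matrix N N ℝ} :
    IsLyapunovStable A ↔ HasBoundedOrbits (complexOperator A) := by
  constructor
  · intro hA z
    obtain ⟨C, -, hC⟩ := hA (Complex.re ∘ z)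
    obtain ⟨D, -, hD⟩ := hA (Complex.im ∘ z)
    refine ⟨C + D, fun t ht ↦ ?_⟩
    rw [exp_smul_complexOperator_apply]
    refine norm_add_le_of_le ?_ ?_
    · exact (norm_ofReal_comp _).trans_le (hC t ht).le
    · rw [norm_smul, Complex.norm_I, one_mul, norm_ofReal_comp]
      exact (hD t ht).le
  · intro hT x
    obtain ⟨C, hC⟩ := hT (Complex.ofReal ∘ x)
    simp only [exp_smul_complexOperator_apply_ofReal, norm_ofReal_comp] at hC
    have hC₀ : 0 ≤ C := (norm_nonneg _).trans (hC 0 le_rfl)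
    exact ⟨C + 1, by positivity, fun t ht ↦ (hC t ht).trans_lt (lt_add_one C)⟩

lemma hasEigenvalue_complexOperator_iff {A : Matrix N N ℝ} {μ : ℂ} :
    Module.End.HasEigenvalue (complexOperator A : Module.End ℂ (N → ℂ)) μ ↔
      ∃ v : N → ℂ, v ≠ 0 ∧ A.map Complex.ofReal *ᵥ v = μ • v := by
  constructor
  · intro hμ
    obtain ⟨v, hv⟩ := hμ.exists_hasEigenvector
    exact ⟨v, hv.2, hv.apply_eq_smul⟩
  · rintro ⟨v, hv₀, hv⟩
    exact Module.End.hasEigenvalue_of_hasEigenvector ⟨Module.End.mem_eigenspace_iff.2 hv, hv₀⟩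

end Complexification

theorem semistable_iff_lyapunov_and_no_imaginary_eigenvalue_general {N : Type*} [Fintype N]
    [DecidableEq N] (A : Matrix N N ℝ) :
    IsSemistable A ↔
      (IsLyapunovStable A ∧
        ∀ lam : ℂ, (∃ v : N → ℂ, v ≠ 0 ∧
            (A.map (Complex.ofReal)) *ᵥ v = lam • v) → lam.re = 0 → lam = 0) := by
  simp only [isSemistable_iff_hasConvergentOrbits, isLyapunovStable_iff_hasBoundedOrbits,
    ← hasEigenvalue_complexOperator_iff]
  exact hasConvergentOrbits_iff_hasBoundedOrbits_and_no_imaginary_eigenvalue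

/-- A real square matrix is semistable iff it is Lyapunov stable and
has no nonzero purely imaginary eigenvalue. -/
theorem semistable_iff_lyapunov_and_no_imaginary_eigenvalue
    (n : ℕ) (A : Matrix (Fin n) (Fin n) ℝ) :
    IsSemistable A ↔
      (IsLyapunovStable A ∧
        ∀ lam : ℂ, (∃ v : Fin n → ℂ, v ≠ 0 ∧
            (A.map (Complex.ofReal)) *ᵥ v = lam • v) → lam.re = 0 → lam = 0) :=
  semistable_iff_lyapunov_and_no_imaginary_eigenvalue_general A
end
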